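/- Let M be a C-minimal structure satisfying condition (NB), F = {f_u : u ∈ U} a nice family of functions with domain V and absorbing element e, and g : V → V a definable function with g(e) = e. Then: (1) there is a cone W with e ∈ W ⊆ V such that Δ(f_u(x), f_v(x), g(x)) holds for all u,v ∈ T_g and all x ∈ W; (2) if T_g contains more than one element and u ∈ T_g, then there is a cone W with e ∈ W ⊆ V such that C(f_z(x), f_u(x), g(x)) holds for all z ∈ U∖T_g and all x ∈ W∖{e}. -/

import Mathlib

open FirstOrder Set

universe u

namespace CMinPaper

variable {M : Type u}

/-- The axioms of a (dense) C-relation. -/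
def IsCRelation (C : M → M → M → Prop) : Prop :=
  (∀ x y z, C x y z → C x z y) ∧
  (∀ x y z, C x y z → ¬ C y x z) ∧
  (∀ x y z w, C x y z → C x w z ∨ C w y z) ∧
  (∀ x y, x ≠ y → ∃ z, z ≠ y ∧ C x y z)

/-- A cone (open ball). -/
def IsCone (C : M → M → M → Prop) (s : Set M) : Prop :=
  ∃ a b : M, a ≠ b ∧ s = {x | C a x b}

/-- A 0-level set (closed ball). -/
def IsClosedBall (C : M → M → M → Prop) (s : Set M) : Prop :=
  ∃ a b : M, s = {x | ¬ C x a b}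

/-- A ball is a cone or a closed ball. -/
def IsBall (C : M → M → M → Prop) (s : Set M) : Prop :=
  IsCone C s ∨ IsClosedBall C s

/-- The node `a ∧ b` of the underlying tree, viewed as the closed ball
`{z | ¬ C z a b}` of `M` it determines. -/
def node (C : M → M → M → Prop) (a b : M) : Set M := {x | ¬ C x a b}

/-- `Δ(x,y,z)`. -/
def Delta (C : M → M → M → Prop) (x y z : M) : Prop := ¬ C x y z ∧ ¬ C y x z

/-- The (unary) sets which are definable by a quantifier-free formula with
parameters using only `C` and equality.  A term is either the variable
(`Option.none`) or a parameter (`Option.some a`). -/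
inductive QFDef (C : M → M → M → Prop) : Set M → Prop
  | atomC (t₁ t₂ t₃ : Option M) :
      QFDef C {x | C (t₁.getD x) (t₂.getD x) (t₃.getD x)}
  | atomEq (t₁ t₂ : Option M) : QFDef C {x | t₁.getD x = t₂.getD x}
  | compl {s : Set M} : QFDef C s → QFDef C sᶜ
  | union {s t : Set M} : QFDef C s → QFDef C t → QFDef C (s ∪ t)

/-- The ternary relation interpreting the symbol `r`. -/
def interpC (L : FirstOrder.Language.{u, u}) (M : Type u) [L.Structure M]
    (r : L.Relations 3) : M → M → M → Prop :=
  fun a b c => Language.Structure.RelMap r ![a, b, c]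

/-- `M` is C-minimal: in every elementarily equivalent structure, every
definable (with parameters) subset is quantifier-free definable using only
`C` and `=`. -/
def CMinimal (L : FirstOrder.Language.{u, u}) (M : Type u) [L.Structure M]
    (r : L.Relations 3) : Prop :=
  ∀ (N : Type u) (SN : L.Structure N),
    letI := SN
    L.ElementarilyEquivalent M N →
      ∀ s : Set N, Set.Definable₁ (univ : Set N) L s → QFDef (interpC L N r) s

/-- The (model-theoretic) algebraic closure of a set of parameters. -/
def acl (L : FirstOrder.Language.{u, u}) (M : Type u) [L.Structure M] (A : Set M) : Set M :=
  {a | ∃ s : Set M, Set.Definable₁ A L s ∧ s.Finite ∧ a ∈ s}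

/-- The Steinitz exchange property for the algebraic closure. -/
def HasExchange (L : FirstOrder.Language.{u, u}) (M : Type u) [L.Structure M] : Prop :=
  ∀ (A : Set M) (a b : M),
    a ∈ acl L M (A ∪ {b}) → a ∉ acl L M A → b ∈ acl L M (A ∪ {a})

/-- `M` is geometric: acl has the exchange property in every elementarily
equivalent structure. -/
def Geometric (L : FirstOrder.Language.{u, u}) (M : Type u) [L.Structure M] : Prop :=
  ∀ (N : Type u) (SN : L.Structure N),
    letI := SN
    L.ElementarilyEquivalent M N → HasExchange L N

/-- `M` is trivial: in every elementarily equivalent structure the pregeometry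
given by acl is trivial. -/
def TrivialGeometry (L : FirstOrder.Language.{u, u}) (M : Type u) [L.Structure M] : Prop :=
  ∀ (N : Type u) (SN : L.Structure N),
    letI := SN
    L.ElementarilyEquivalent M N →
      ∀ A : Set N, acl L N A = ⋃ a ∈ A, acl L N {a}

/-- `M` is definably maximal: every definable family of cones which is linearly
ordered by inclusion has a non-empty intersection. -/
def DefinablyMaximal (L : FirstOrder.Language.{u, u}) (M : Type u) [L.Structure M]
    (r : L.Relations 3) : Prop :=
  ∀ (n : ℕ) (S : Set (Fin (n + 1) → M)) (P : Set (Fin n → M)),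
    Set.Definable (univ : Set M) L S →
    (∀ p ∈ P, IsCone (interpC L M r) {x | Fin.snoc p x ∈ S}) →
    (∀ p ∈ P, ∀ q ∈ P,
      {x | Fin.snoc p x ∈ S} ⊆ {x | Fin.snoc q x ∈ S} ∨
        {x | Fin.snoc q x ∈ S} ⊆ {x | Fin.snoc p x ∈ S}) →
    P.Nonempty → (⋂ p ∈ P, {x | Fin.snoc p x ∈ S}).Nonempty

/-- Leaves of the underlying tree are the singletons. -/
def IsLeafSet (s : Set M) : Prop := ∃ x : M, s = {x}

/-- The interval `(lo, hi)` of the branch `br c`, consisting of all nodes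
(coded as the closed balls they determine) strictly between the endpoints.
`lo = none` denotes `-∞`; `lo = some p` denotes the node `c ∧ p`; `hi : M`
denotes the node `c ∧ hi` (the leaf `c` when `hi = c`).  The tree ordering is
reverse inclusion of balls. -/
def branchInterval (C : M → M → M → Prop) (c : M) (lo : Option M) (hi : M) :
    Set (Set M) :=
  {B | (∃ s, B = node C c s) ∧ ¬ IsLeafSet B ∧
    (∀ p ∈ lo, B ⊂ node C c p) ∧ node C c hi ⊂ B}

/-- `I` is an interval of the branch `br c`. -/
def IsIntervalOn (C : M → M → M → Prop) (c : M) (I : Set (Set M)) : Prop :=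
  ∃ (lo : Option M) (hi : M), I = branchInterval C c lo hi

/-- `I` is a bounded interval of `br c` (bounded from below and from above). -/
def IsBoundedInterval (C : M → M → M → Prop) (c : M) (I : Set (Set M)) : Prop :=
  ∃ p hi : M, I = branchInterval C c (some p) hi ∧ ¬ IsLeafSet (node C c hi)

/-- `I` is an unbounded (i.e. not bounded) interval of `br c`. -/
def IsUnboundedInterval (C : M → M → M → Prop) (c : M) (I : Set (Set M)) :
    Prop :=
  IsIntervalOn C c I ∧ ¬ IsBoundedInterval C c I

/-- The relation on nodes coded by `S ⊆ M²` via `(s,t) ↦ (c ∧ s, d ∧ t)`. -/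
def codedRel (C : M → M → M → Prop) (S : Set (Fin 2 → M)) (c d : M)
    (B B' : Set M) : Prop :=
  ∃ s t : M, ![s, t] ∈ S ∧ B = node C c s ∧ B' = node C d t

/-- `S ⊆ M²` codes a bijection between the set `I` of nodes of `br c` and the
set `J` of nodes of `br d`. -/
def CodesBijectionBetween (C : M → M → M → Prop) (S : Set (Fin 2 → M))
    (c d : M) (I J : Set (Set M)) : Prop :=
  (∀ B B', codedRel C S c d B B' → B ∈ I ∧ B' ∈ J) ∧
  (∀ B ∈ I, ∃! B', B' ∈ J ∧ codedRel C S c d B B') ∧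
  (∀ B' ∈ J, ∃! B, B ∈ I ∧ codedRel C S c d B B')

/-- Condition (NB): there is no definable bijection between a bounded interval
and an unbounded interval of branches of the underlying tree. -/
def NB (L : FirstOrder.Language.{u, u}) (M : Type u) [L.Structure M] (r : L.Relations 3) :
    Prop :=
  ∀ (c d : M) (S : Set (Fin 2 → M)), Set.Definable (univ : Set M) L S →
    ∀ I J : Set (Set M),
      IsBoundedInterval (interpC L M r) c I →
      IsUnboundedInterval (interpC L M r) d J →
      ¬ CodesBijectionBetween (interpC L M r) S c d I J

/-- An infinite group definable in `M`: an infinite definable `G ⊆ Mⁿ`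
together with a definable subset of `M^{3n}` which is the graph of a group
operation on `G`. -/
def DefinableInfiniteGroup (L : FirstOrder.Language.{u, u}) (M : Type u)
    [L.Structure M] : Prop :=
  ∃ (n : ℕ) (G : Set (Fin n → M)) (mul : (Fin n → M) → (Fin n → M) → Fin n → M)
    (one : Fin n → M) (inv : (Fin n → M) → Fin n → M),
    Set.Definable (univ : Set M) L G ∧ G.Infinite ∧
    Set.Definable (univ : Set M) L
      {t : (Fin n ⊕ (Fin n ⊕ Fin n)) → M |
        t ∘ Sum.inl ∈ G ∧ t ∘ Sum.inr ∘ Sum.inl ∈ G ∧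
          mul (t ∘ Sum.inl) (t ∘ Sum.inr ∘ Sum.inl) = t ∘ Sum.inr ∘ Sum.inr} ∧
    one ∈ G ∧ (∀ a ∈ G, ∀ b ∈ G, mul a b ∈ G) ∧
    (∀ a ∈ G, ∀ b ∈ G, ∀ c ∈ G, mul (mul a b) c = mul a (mul b c)) ∧
    (∀ a ∈ G, mul one a = a ∧ mul a one = a) ∧
    (∀ a ∈ G, inv a ∈ G ∧ mul a (inv a) = one ∧ mul (inv a) a = one)

/-- `g` is a C-isomorphism from `A` onto `B`. -/
def CIsoOn (C : M → M → M → Prop) (A B : Set M) (g : M → M) : Prop :=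
  Set.BijOn g A B ∧ ∀ x ∈ A, ∀ y ∈ A, ∀ z ∈ A, (C x y z ↔ C (g x) (g y) (g z))

/-- The relation `C_e(f,g,h)`. -/
def CeRel (C : M → M → M → Prop) (V : Set M) (e : M) (f g h : M → M) : Prop :=
  ∃ W : Set M, IsCone C W ∧ e ∈ W ∧ W ⊆ V ∧ ∀ x ∈ W \ {e}, C (f x) (g x) (h x)

/-- The relation `(¬C)_e(f,g,h)`. -/
def NCeRel (C : M → M → M → Prop) (V : Set M) (e : M) (f g h : M → M) : Prop :=
  ∃ W : Set M, IsCone C W ∧ e ∈ W ∧ W ⊆ V ∧ ∀ x ∈ W \ {e}, ¬ C (f x) (g x) (h x)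

/-- A function is definable on `V` if its graph over `V` is definable. -/
def DefinableFunOn (L : FirstOrder.Language.{u, u}) (M : Type u) [L.Structure M]
    (V : Set M) (g : M → M) : Prop :=
  Set.Definable (univ : Set M) L {t : Fin 2 → M | t 0 ∈ V ∧ g (t 0) = t 1}

/-- A nice family of functions `{f u : u ∈ U}` on the cone `V`, with absorbing
element `e`. -/
structure NiceFamily (L : FirstOrder.Language.{u, u}) (M : Type u) [L.Structure M]
    (C : M → M → M → Prop) where
  U : Set M
  V : Set M
  e : M
  f : M → M → M
  coneU : IsCone C U
  coneV : IsCone C V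
  he : e ∈ V
  definable : Set.Definable (univ : Set M) L
    {t : Fin 3 → M | t 0 ∈ U ∧ t 1 ∈ V ∧ f (t 0) (t 1) = t 2}
  auto : ∀ u ∈ U, CIsoOn C V V (f u)
  fixe : ∀ u ∈ U, f u e = e
  star : ∀ x ∈ V \ {e}, ∃ V' : Set M, V' ⊆ V ∧ IsCone C V' ∧
    CIsoOn C U V' fun u => f u x

namespace NiceFamily

variable {L : FirstOrder.Language.{u, u}} [L.Structure M] {C : M → M → M → Prop}

/-- `f u` is tangent to `g` relatively to the family. -/
def Tangent (F : NiceFamily L M C) (u : M) (g : M → M) : Prop :=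
  u ∈ F.U ∧ ∀ u' ∈ F.U, NCeRel C F.V F.e (F.f u) (F.f u') g

/-- The set `T_g` of indices of tangents to `g`. -/
def Tset (F : NiceFamily L M C) (g : M → M) : Set M := {u | F.Tangent u g}

/-- The set `Γ_{g,u}`. -/
def Gamma (F : NiceFamily L M C) (g : M → M) (u : M) : Set M :=
  {y | y ∈ F.U ∧ CeRel C F.V F.e (F.f u) (F.f y) g}

/-- `g` is derivable relatively to the family: it has exactly one tangent. -/
def Derivable (F : NiceFamily L M C) (g : M → M) : Prop := ∃! u, F.Tangent u g

/-- `f u` is non-dilating. -/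
def NonDilating (F : NiceFamily L M C) (u : M) : Prop :=
  NCeRel C F.V F.e (fun x => F.f u (F.f u x)) (F.f u) id

/-- `u₀` is an identity element for the family. -/
def HasIdentity (F : NiceFamily L M C) (u₀ : M) : Prop :=
  u₀ ∈ F.U ∧ ∀ x ∈ F.V, F.f u₀ x = x

end NiceFamily

/-- Continuity on `A` with respect to the topology generated by the cones. -/
def ContinuousOnCones (C : M → M → M → Prop) (A : Set M) (g : M → M) : Prop :=
  ∀ x ∈ A, ∀ W : Set M, IsCone C W → g x ∈ W →
    ∃ W' : Set M, IsCone C W' ∧ x ∈ W' ∧ ∀ y ∈ W' ∩ A, g y ∈ W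

/-!
Near `e` the function `g` either runs through the cone `{f_u(x) : u ∈ U}` or avoids it, since
C-minimality makes the filter of punctured neighbourhoods of `e` decide every definable set. If `g`
avoids the cone, ultrametricity gives `¬ C (f_u x) (f_v x) (g x)` for all `u`, `v` in `U`, so every
`f_u` is tangent to `g`. Otherwise `g x = f_{w(x)}(x)` for a definable function `w` with values in
`U`, and by property (*) a tangent index is a point of `U` approximating `w x` best as `x` tends to
`e`. There is at most one such point: if there were several, they would form a closed ball or a
cone `T`, and as `x` tends to `e` the point `w x` would do one of the following.

* It stays in the closed ball `T` but leaves every maximal proper subcone. An infinite sequence of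
  distinct subcones visited by `w` and another one avoiding the values of `w` closer and closer to
  `e` would then, in an ultrapower, be separated by a definable set that C-minimality forbids.
* It approaches the closed ball `T` from outside, or the base of the cone `T` from inside. The nodes
  it passes then match definably the nodes converging to the leaf `e` with those of a bounded
  interval, against (NB).
-/

section CRelation

variable {C : M → M → M → Prop}

namespace IsCRelation

theorem symm (h : IsCRelation C) {x y z : M} (hx : C x y z) : C x z y := h.1 x y z hx

theorem asymm (h : IsCRelation C) {x y z : M} (hx : C x y z) : ¬ C y x z := h.2.1 x y z hx

theorem split (h : IsCRelation C) {x y z : M} (hx : C x y z) (w : M) : C x w z ∨ C w y z :=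
  h.2.2.1 x y z w hx

theorem irrefl (h : IsCRelation C) (x y : M) : ¬ C x x y := fun hx => h.asymm hx hx

theorem irrefl_right (h : IsCRelation C) (x y : M) : ¬ C x y x := fun hx =>
  h.irrefl x y (h.symm hx)

theorem ne (h : IsCRelation C) {x y z : M} (hx : C x y z) : x ≠ y := by
  rintro rfl
  exact h.irrefl _ _ hx

theorem ne_right (h : IsCRelation C) {x y z : M} (hx : C x y z) : x ≠ z := h.ne (h.symm hx)

theorem exists_closer (h : IsCRelation C) {x e : M} (hx : x ≠ e) : ∃ z, z ≠ e ∧ C x z e := by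
  obtain ⟨z, hz, hxz⟩ := h.2.2.2 x e hx
  exact ⟨z, hz, h.symm hxz⟩

theorem rel_self_right (h : IsCRelation C) {x y : M} : C x y y ↔ x ≠ y := by
  refine ⟨h.ne, fun hxy => ?_⟩
  obtain ⟨z, -, hz⟩ := h.exists_closer hxy
  exact (h.split hz y).resolve_right (h.irrefl_right y z)

theorem isStrictWeakOrder (h : IsCRelation C) (u : M) : IsStrictWeakOrder M fun a b => C a b u where
  irrefl a := h.irrefl a u
  trans a b c := by grind [h.symm, h.asymm, h.split]
  incomp_trans a b c := by grind [h.symm, h.asymm, h.split]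

theorem trans (h : IsCRelation C) {u a b c : M} (h1 : C a b u) (h2 : C b c u) : C a c u :=
  (h.isStrictWeakOrder u).trans _ _ _ h1 h2

end IsCRelation

theorem node_subset_node (h : IsCRelation C) {c a b : M} :
    node C c a ⊆ node C c b ↔ ¬ C a b c := by
  refine ⟨fun hs hc => hs (h.irrefl_right a c) (h.symm hc), fun hc x hx hxb => ?_⟩
  grind [node, h.symm, h.asymm, h.split]

theorem node_eq_node (h : IsCRelation C) {c a b : M} :
    node C c a = node C c b ↔ ¬ C a b c ∧ ¬ C b a c := by
  rw [Subset.antisymm_iff, node_subset_node h, node_subset_node h]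

theorem node_ssubset_node (h : IsCRelation C) {c a b : M} :
    node C c a ⊂ node C c b ↔ C b a c := by
  rw [ssubset_iff_subset_not_subset, node_subset_node h, node_subset_node h, not_not]
  exact and_iff_right_of_imp h.asymm

theorem isLeafSet_node (h : IsCRelation C) {c s : M} : IsLeafSet (node C c s) ↔ s = c := by
  constructor
  · rintro ⟨x, hx⟩
    have hs : s ∈ node C c s := h.irrefl_right s c
    have hc : c ∈ node C c s := h.irrefl c s
    rw [hx] at hs hc
    exact hs.trans hc.symm
  · rintro rfl
    exact ⟨s, by ext x; simp [node, h.rel_self_right]⟩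

theorem mem_branchInterval_some (h : IsCRelation C) {c p hi : M} {B : Set M} :
    B ∈ branchInterval C c (some p) hi ↔ ∃ s, B = node C c s ∧ C p s c ∧ C s hi c := by
  constructor
  · rintro ⟨⟨s, rfl⟩, -, hlo, hhi⟩
    exact ⟨s, rfl, (node_ssubset_node h).1 (hlo p rfl), (node_ssubset_node h).1 hhi⟩
  · rintro ⟨s, rfl, hlo, hhi⟩
    refine ⟨⟨s, rfl⟩, fun hs => h.ne_right hhi ((isLeafSet_node h).1 hs), ?_,
      (node_ssubset_node h).2 hhi⟩
    rintro _ ⟨⟩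
    exact (node_ssubset_node h).2 hlo

theorem isUnboundedInterval_leaf (h : IsCRelation C) {e p : M} (hp : p ≠ e) :
    IsUnboundedInterval C e (branchInterval C e (some p) e) := by
  refine ⟨⟨some p, e, rfl⟩, ?_⟩
  rintro ⟨q, hi, heq, hleaf⟩
  rw [isLeafSet_node h] at hleaf
  obtain ⟨x, hxe, hpx, hx⟩ : ∃ x, x ≠ e ∧ C p x e ∧ ¬ C x hi e := by
    by_cases hph : C p hi e
    · exact ⟨hi, hleaf, hph, h.irrefl _ _⟩
    · obtain ⟨x, hxe, hpx⟩ := h.exists_closer hp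
      exact ⟨x, hxe, hpx, fun hx => hph (h.trans hpx hx)⟩
  have hmem : node C e x ∈ branchInterval C e (some p) e :=
    (mem_branchInterval_some h).2 ⟨x, rfl, hpx, h.rel_self_right.2 hxe⟩
  rw [heq] at hmem
  exact hx ((node_ssubset_node h).1 hmem.2.2.2)

end CRelation

section Decided

open Filter

variable {C : M → M → M → Prop} {l : Filter M}

/-- A filter decides a set if it contains the set or its complement. -/
def Decided (l : Filter M) (A : Set M) : Prop := A ∈ l ∨ Aᶜ ∈ l

theorem decided_of_eventually_iff {S : M → Prop} {p : Prop} (hS : ∀ᶠ z in l, S z ↔ p) :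
    Decided l {z | S z} := by
  by_cases hp : p
  · exact Or.inl (hS.mono fun z hz => hz.2 hp)
  · exact Or.inr (hS.mono fun z hz h => hp (hz.1 h))

theorem Decided.union {A B : Set M} (hA : Decided l A) (hB : Decided l B) : Decided l (A ∪ B) := by
  rcases hA with hA | hA
  · exact Or.inl (mem_of_superset hA subset_union_left)
  rcases hB with hB | hB
  · exact Or.inl (mem_of_superset hB subset_union_right)
  · exact Or.inr (by rw [compl_union]; exact inter_mem hA hB)

theorem QFDef.decided (h : IsCRelation C) (hne : ∀ a, ∀ᶠ z in l, z ≠ a)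
    (hleft : ∀ a b, Decided l {z | C z a b}) (hmid : ∀ a b, Decided l {z | C a z b})
    {A : Set M} (hA : QFDef C A) : Decided l A := by
  have hright : ∀ a b, Decided l {z | C a b z} := fun a b => by
    simpa only [show ∀ z, C a b z ↔ C a z b from fun _ => ⟨h.symm, h.symm⟩] using hmid a b
  induction hA with
  | atomC t₁ t₂ t₃ =>
    rcases t₁ with _ | a <;> rcases t₂ with _ | b <;> rcases t₃ with _ | c <;>
      simp only [Option.getD_some, Option.getD_none]
    · exact Or.inr (Eventually.of_forall fun x => h.irrefl x x)
    · exact Or.inr (Eventually.of_forall fun x => h.irrefl x c)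
    · exact Or.inr (Eventually.of_forall fun x => h.irrefl_right x b)
    · exact hleft b c
    · exact Or.inl ((hne a).mono fun z hz => h.rel_self_right.2 hz.symm)
    · exact hmid a c
    · exact hright a b
    · exact decided_of_eventually_iff (Eventually.of_forall fun _ => Iff.rfl)
  | atomEq t₁ t₂ =>
    rcases t₁ with _ | a <;> rcases t₂ with _ | b <;>
      simp only [Option.getD_some, Option.getD_none]
    · exact decided_of_eventually_iff (Eventually.of_forall fun _ => Iff.rfl)
    · exact Or.inr (hne b)
    · exact Or.inr ((hne a).mono fun z hz => hz.symm)
    · exact decided_of_eventually_iff (Eventually.of_forall fun _ => Iff.rfl)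
  | compl _ ih => exact ih.symm.imp_right fun hA => by rwa [compl_compl]
  | union _ _ ihA ihB => exact ihA.union ihB

theorem QFDef.decided_of_cut (h : IsCRelation C) {u : M} {D : Set M}
    (hD : ∀ a ∈ D, ∀ᶠ z in l, C z a u) (hDc : ∀ a ∉ D, ∀ᶠ z in l, C a z u)
    {A : Set M} (hA : QFDef C A) : Decided l A := by
  have hcut : ∀ a, ∀ᶠ z in l, a ∈ D ∧ C z a u ∨ a ∉ D ∧ C a z u := fun a => by
    by_cases ha : a ∈ D
    · exact (hD a ha).mono fun z hz => Or.inl ⟨ha, hz⟩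
    · exact (hDc a ha).mono fun z hz => Or.inr ⟨ha, hz⟩
  refine hA.decided h (fun a => ?_) (fun a b => ?_) fun a b => ?_
  · filter_upwards [hcut a] with z hz
    rcases hz with ⟨-, hz⟩ | ⟨-, hz⟩
    · exact h.ne hz
    · exact (h.ne hz).symm
  · refine decided_of_eventually_iff (p := a ∈ D ∧ b ∈ D ∨ a ∉ D ∧ b ∉ D ∧ C u a b) ?_
    filter_upwards [hcut a, hcut b] with z ha hb
    grind [h.symm, h.asymm, h.split]
  · refine decided_of_eventually_iff (p := a ∉ D ∧ (b ∈ D ∨ C a u b)) ?_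
    filter_upwards [hcut a, hcut b] with z ha hb
    grind [h.symm, h.asymm, h.split]

end Decided

section Tail

open Filter

variable {P : Set M} {N : M → M → Prop}

theorem rel_or_rel_of_isStrictWeakOrder (hN : IsStrictWeakOrder M N) {a c : M} (hac : N a c)
    (b : M) : N a b ∨ N b c := by
  have := hN.irrefl
  have := hN.trans
  have := hN.incomp_trans a b c
  grind

/-- The filter generated by the final segments of `P` with respect to the strict order `N`. -/
def tail (P : Set M) (N : M → M → Prop) : Filter M := ⨅ v ∈ P, 𝓟 {x | x ∈ P ∧ N v x}

theorem eventually_tail {v : M} (hv : v ∈ P) : ∀ᶠ x in tail P N, x ∈ P ∧ N v x :=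
  mem_iInf_of_mem v (mem_iInf_of_mem hv (mem_principal_self _))

theorem mem_tail (hN : IsStrictWeakOrder M N) (hP : P.Nonempty) {A : Set M} :
    A ∈ tail P N ↔ ∃ v ∈ P, ∀ x ∈ P, N v x → x ∈ A := by
  have hdir : DirectedOn ((fun v => 𝓟 {x | x ∈ P ∧ N v x}) ⁻¹'o (· ≥ ·)) P := by
    intro a ha b hb
    simp only [Order.Preimage, ge_iff_le, le_principal_iff, mem_principal]
    by_cases hab : N a b
    · exact ⟨b, hb, fun x hx => ⟨hx.1, hN.trans _ _ _ hab hx.2⟩, Subset.rfl⟩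
    · refine ⟨a, ha, Subset.rfl, fun x hx => ⟨hx.1, ?_⟩⟩
      exact (rel_or_rel_of_isStrictWeakOrder hN hx.2 b).resolve_left hab
  simp only [tail, mem_biInf_of_directed hdir hP, mem_principal, subset_def, mem_ofPred_eq, and_imp]

end Tail

section Near

open Filter

variable {C : M → M → M → Prop}

/-- The filter of punctured cone neighbourhoods of `e`. -/
def near (C : M → M → M → Prop) (e : M) : Filter M := tail {x | x ≠ e} fun a b => C a b e

theorem mem_near [Nontrivial M] (h : IsCRelation C) {e : M} {A : Set M} :
    A ∈ near C e ↔ ∃ v, v ≠ e ∧ ∀ x, x ≠ e → C v x e → x ∈ A :=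
  mem_tail (h.isStrictWeakOrder e) (exists_ne e)

theorem near_neBot [Nontrivial M] (h : IsCRelation C) (e : M) : (near C e).NeBot := by
  rw [neBot_iff, ne_eq, ← empty_mem_iff_bot, mem_near h]
  rintro ⟨v, hv, hempty⟩
  obtain ⟨x, hx, hvx⟩ := h.exists_closer hv
  exact hempty x hx hvx

namespace IsCone

variable {U : Set M}

theorem nontrivial (hU : IsCone C U) : Nontrivial M := by
  obtain ⟨a, b, hab, -⟩ := hU
  exact ⟨a, b, hab⟩

theorem exists_notMem (h : IsCRelation C) (hU : IsCone C U) : ∃ p, p ∉ U := by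
  obtain ⟨p, q, -, rfl⟩ := hU
  exact ⟨p, h.irrefl p q⟩

theorem exists_eq_of_mem (h : IsCRelation C) (hU : IsCone C U) {e : M} (he : e ∈ U) :
    ∃ a, a ≠ e ∧ U = {x | C a x e} := by
  obtain ⟨a, b, -, rfl⟩ := hU
  refine ⟨a, h.ne he, Set.ext fun x => ?_⟩
  simp only [mem_ofPred_eq] at he ⊢
  grind [h.symm, h.asymm, h.split]

theorem rel_of_notMem (h : IsCRelation C) (hU : IsCone C U) {x y z : M} (hz : z ∉ U) (hx : x ∈ U)
    (hy : y ∈ U) : C z x y := by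
  obtain ⟨a, -, rfl⟩ := hU.exists_eq_of_mem h hx
  simp only [mem_ofPred_eq] at hz hy
  grind [h.symm, h.asymm, h.split]

theorem mem_near_iff (h : IsCRelation C) (hU : IsCone C U) {e : M} (he : e ∈ U) {A : Set M} :
    A ∈ near C e ↔ ∃ W, IsCone C W ∧ e ∈ W ∧ W ⊆ U ∧ ∀ x ∈ W \ {e}, x ∈ A := by
  have := hU.nontrivial
  rw [mem_near h]
  constructor
  · rintro ⟨v, hv, hA⟩
    obtain ⟨a, ha, rfl⟩ := hU.exists_eq_of_mem h he
    by_cases hav : C a v e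
    · exact ⟨_, ⟨v, e, hv, rfl⟩, h.rel_self_right.2 hv, fun x hx => h.trans hav hx,
        fun x hx => hA x hx.2 hx.1⟩
    · refine ⟨_, ⟨a, e, ha, rfl⟩, he, Subset.rfl, fun x hx => hA x hx.2 ?_⟩
      exact (rel_or_rel_of_isStrictWeakOrder (h.isStrictWeakOrder e) hx.1 v).resolve_left hav
  · rintro ⟨W, hW, heW, -, hA⟩
    obtain ⟨a, ha, rfl⟩ := hW.exists_eq_of_mem h heW
    exact ⟨a, ha, fun x hx hax => hA x ⟨hax, hx⟩⟩

end IsCone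

theorem NCeRel.eventually (h : IsCRelation C) {V : Set M} {e : M} {f g k : M → M}
    (hN : NCeRel C V e f g k) : ∀ᶠ x in near C e, ¬ C (f x) (g x) (k x) := by
  obtain ⟨W, hW, heW, -, hfgk⟩ := hN
  exact (hW.mem_near_iff h heW).2 ⟨W, hW, heW, Subset.rfl, hfgk⟩

end Near

section DefinableCompleteness

variable {C : M → M → M → Prop}

theorem QFDef.eq_ball_of_convex (h : IsCRelation C) {u b₀ : M} {D : Set M} (hD : QFDef C D)
    (hu : u ∈ D) (hb₀ : b₀ ∉ D) (hconv : ∀ a ∈ D, ∀ z, ¬ C z u a → z ∈ D) :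
    (∃ a ∈ D, D = {z | ¬ C z u a}) ∨ ∃ b ∉ D, D = {z | C b z u} := by
  have hsep : ∀ a ∈ D, ∀ b ∉ D, C b a u := fun a ha b hb => by
    by_contra hba
    exact hb (hconv a ha b fun hbu => hba (h.symm hbu))
  by_contra! hcon
  obtain ⟨hclosed, hcone⟩ := hcon
  have hinner : ∀ a ∈ D, ∃ z ∈ D, C z a u := by
    intro a ha
    by_contra! hz
    exact hclosed a ha (Subset.antisymm (fun z hzD hza => hz z hzD (h.symm hza)) (hconv a ha))
  have houter : ∀ b ∉ D, ∃ z ∉ D, C b z u := by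
    intro b hb
    by_contra! hz
    exact hcone b hb
      (Subset.antisymm (fun z hzD => hsep z hzD b hb) fun z => not_imp_not.1 (hz z))
  -- The filter of sets that are large on both sides of the boundary of `D`.
  let l := tail Dᶜ (fun a b => C a b u) ⊔ tail D fun a b => C b a u
  have hin : ∀ a ∈ D, ∀ᶠ z in l, C z a u := fun a ha => Filter.mem_sup.2
    ⟨(eventually_tail hb₀).mono fun z hz => hsep a ha z hz.1,
      (eventually_tail ha).mono fun z hz => hz.2⟩
  have hout : ∀ b ∉ D, ∀ᶠ z in l, C b z u := fun b hb => Filter.mem_sup.2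
    ⟨(eventually_tail hb).mono fun z hz => hz.2,
      (eventually_tail hu).mono fun z hz => hsep z hz.1 b hb⟩
  have hl : Decided l D := hD.decided_of_cut h hin hout
  have hswap : IsStrictWeakOrder M fun a b => C b a u :=
    have := h.isStrictWeakOrder u
    inferInstanceAs (IsStrictWeakOrder M (Function.swap fun a b => C a b u))
  rcases hl with hl | hl
  · obtain ⟨b, hb, hbD⟩ := (mem_tail (h.isStrictWeakOrder u) ⟨b₀, hb₀⟩).1 (Filter.mem_sup.1 hl).1
    obtain ⟨z, hz, hbz⟩ := houter b hb
    exact hz (hbD z hz hbz)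
  · obtain ⟨a, ha, haD⟩ := (mem_tail hswap ⟨u, hu⟩).1 (Filter.mem_sup.1 hl).2
    obtain ⟨z, hz, haz⟩ := hinner a ha
    exact haD z hz haz hz

end DefinableCompleteness

section DefinabilityCalculus

variable {L : FirstOrder.Language.{u, u}} [L.Structure M]

/-- A predicate on `α`-indexed tuples of `M` is definable with parameters. It is used on lambda
expressions, so that the definability of a formula is proved along its logical structure. -/
def DefinablePred (L : FirstOrder.Language.{u, u}) [L.Structure M] {α : Type*}
    (p : (α → M) → Prop) : Prop :=
  Set.Definable (univ : Set M) L {t | p t}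

/-- A function from `α`-indexed tuples of `M` to `M` is definable with parameters. -/
abbrev DefinableMap (L : FirstOrder.Language.{u, u}) [L.Structure M] {α : Type*}
    (a : (α → M) → M) : Prop :=
  Set.DefinableFun L (univ : Set M) a

variable {α : Type*}

theorem DefinableMap.var (i : α) : DefinableMap L fun t : α → M => t i := DefinableFun.proj L

theorem DefinableMap.const (a : M) : DefinableMap L fun _ : α → M => a :=
  L.definableFun_const α (mem_univ a)

theorem DefinableMap.comp {f : M → M} (hf : DefinableMap L fun t : Fin 1 → M => f (t 0))
    {a : (α → M) → M} (ha : DefinableMap L a) : DefinableMap L fun t => f (a t) :=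
  DefinableFun.comp (f := fun t : Fin 1 → M => f (t 0)) (g := fun t => ![a t])
    (fun i => by fin_cases i; exact ha) hf

namespace DefinablePred

variable {p q : (α → M) → Prop} {a b c : (α → M) → M}

theorem congr (hp : DefinablePred L p) (h : ∀ t, q t ↔ p t) : DefinablePred L q := by
  rwa [show q = p from funext fun t => propext (h t)]

theorem and (hp : DefinablePred L p) (hq : DefinablePred L q) :
    DefinablePred L fun t => p t ∧ q t :=
  Set.Definable.inter hp hq

theorem or (hp : DefinablePred L p) (hq : DefinablePred L q) :
    DefinablePred L fun t => p t ∨ q t :=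
  Set.Definable.union hp hq

theorem not (hp : DefinablePred L p) : DefinablePred L fun t => ¬ p t :=
  Set.Definable.compl hp

theorem imp (hp : DefinablePred L p) (hq : DefinablePred L q) :
    DefinablePred L fun t => p t → q t :=
  (hp.not.or hq).congr fun _ => imp_iff_not_or

theorem iff (hp : DefinablePred L p) (hq : DefinablePred L q) :
    DefinablePred L fun t => p t ↔ q t :=
  ((hp.imp hq).and (hq.imp hp)).congr fun _ => iff_iff_implies_and_implies

theorem ex {q : (α → M) → M → Prop}
    (h : DefinablePred L fun t : α ⊕ Fin 1 → M => q (fun i => t (Sum.inl i)) (t (Sum.inr 0))) :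
    DefinablePred L fun t => ∃ x, q t x :=
  congr (Definable.exists_of_finite h) fun _ =>
    ⟨fun ⟨x, hx⟩ => ⟨fun _ => x, hx⟩, fun ⟨y, hy⟩ => ⟨y 0, hy⟩⟩

theorem all {q : (α → M) → M → Prop}
    (h : DefinablePred L fun t : α ⊕ Fin 1 → M => q (fun i => t (Sum.inl i)) (t (Sum.inr 0))) :
    DefinablePred L fun t => ∀ x, q t x :=
  (ex (q := fun t x => ¬ q t x) h.not).not.congr fun _ => not_exists_not.symm

theorem eq (ha : DefinableMap L a) (hb : DefinableMap L b) : DefinablePred L fun t => a t = b t :=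
  DefinableFun.ofPred_eq ha hb

theorem ne (ha : DefinableMap L a) (hb : DefinableMap L b) : DefinablePred L fun t => a t ≠ b t :=
  (eq ha hb).not

theorem mem {s : Set M} (hs : Set.Definable₁ (univ : Set M) L s) (ha : DefinableMap L a) :
    DefinablePred L fun t => a t ∈ s :=
  Set.Definable.preimage_map (F := fun t => ![a t]) (fun i => by fin_cases i; exact ha) hs

theorem comp₂ {p : M → M → Prop} (hp : DefinablePred L fun t : Fin 2 → M => p (t 0) (t 1))
    (ha : DefinableMap L a) (hb : DefinableMap L b) : DefinablePred L fun t => p (a t) (b t) :=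
  Set.Definable.preimage_map (F := fun t => ![a t, b t])
    (fun i => by
      fin_cases i
      · exact ha
      · exact hb) hp

theorem comp₃ {p : M → M → M → Prop}
    (hp : DefinablePred L fun t : Fin 3 → M => p (t 0) (t 1) (t 2))
    (ha : DefinableMap L a) (hb : DefinableMap L b) (hc : DefinableMap L c) :
    DefinablePred L fun t => p (a t) (b t) (c t) :=
  Set.Definable.preimage_map (F := fun t => ![a t, b t, c t])
    (fun i => by
      fin_cases i
      · exact ha
      · exact hb
      · exact hc) hp

theorem interpC (r : L.Relations 3) (ha : DefinableMap L a) (hb : DefinableMap L b)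
    (hc : DefinableMap L c) : DefinablePred L fun t => interpC L M r (a t) (b t) (c t) := by
  refine comp₃ (p := CMinPaper.interpC L M r) ?_ ha hb hc
  refine Set.Definable.mono (A := ∅) ?_ (empty_subset _)
  refine empty_definable_iff.2 ⟨Language.Relations.formula r fun i => Language.Term.var i, ?_⟩
  ext t
  have ht : ![t 0, t 1, t 2] = t := by
    ext i
    fin_cases i <;> rfl
  simp only [Set.mem_ofPred_eq, Language.Formula.realize_rel, CMinPaper.interpC, ht]
  rfl

theorem exists_definableMap {R : M → M → Prop}
    (hR : DefinablePred L fun t : Fin 2 → M => R (t 0) (t 1))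
    (hfun : ∀ x y z, R x y → R x z → y = z) (e : M) :
    ∃ w : M → M, (DefinableMap L fun t : Fin 1 → M => w (t 0)) ∧ ∀ x y, R x y → w x = y := by
  have huniq : ∀ x, ∃! y, R x y ∨ (¬ ∃ z, R x z) ∧ y = e := fun x => by
    by_cases hx : ∃ z, R x z
    · obtain ⟨y, hy⟩ := hx
      exact ⟨y, Or.inl hy, fun z hz =>
        hfun x z y (hz.resolve_right fun hz' => hz'.1 ⟨y, hy⟩) hy⟩
    · exact ⟨e, Or.inr ⟨hx, rfl⟩, fun y hy => (hy.resolve_left fun h => hx ⟨y, h⟩).2⟩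
  choose w hw hwuniq using huniq
  refine ⟨w, ?_, fun x y hxy => (hwuniq x y (Or.inl hxy)).symm⟩
  have hgraph : DefinablePred L fun t : Fin 2 → M => w (t 0) = t 1 :=
    (hR.or ((ex (comp₂ hR (DefinableMap.var _) (DefinableMap.var _))).not.and
      (eq (DefinableMap.var 1) (DefinableMap.const e)))).congr fun t =>
        ⟨fun ht => ht ▸ hw (t 0), fun ht => (hwuniq _ _ ht).symm⟩
  exact comp₂ (p := fun x y => w x = y) hgraph (a := fun t : Option (Fin 1) → M => t (some 0))
    (b := fun t => t none) (DefinableMap.var _) (DefinableMap.var _)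

end DefinablePred

end DefinabilityCalculus

section Cut

variable {N E : M → M → Prop} {v v' x : M}

/-- `E m` is the final segment starting at `m` of the strict order `N`, either uniformly with its
endpoint `m` or uniformly without it. -/
def IsCutRel (N E : M → M → Prop) : Prop := E = N ∨ E = fun m x => ¬ N x m

namespace IsCutRel

theorem of_rel (hE : IsCutRel N E) (hN : IsStrictWeakOrder M N) (hv : N v x) : E v x := by
  rcases hE with rfl | rfl
  · exact hv
  · exact fun hx => hN.irrefl _ (hN.trans _ _ _ hv hx)

theorem rel_of_not (hE : IsCutRel N E) (hN : IsStrictWeakOrder M N) (hv : E v x)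
    (hv' : ¬ E v' x) : N v v' := by
  rcases hE with rfl | rfl
  · exact (rel_or_rel_of_isStrictWeakOrder hN hv v').resolve_right hv'
  · exact (rel_or_rel_of_isStrictWeakOrder hN (not_not.1 hv') v).resolve_left hv

theorem exists_mem_and_not (hE : IsCutRel N E) (hN : IsStrictWeakOrder M N) (hvv' : N v v') :
    ∃ x ∈ ({v, v'} : Set M), E v x ∧ ¬ E v' x := by
  rcases hE with rfl | rfl
  · exact ⟨v', by simp, hvv', hN.irrefl _⟩
  · exact ⟨v, by simp, hN.irrefl _, not_not.2 hvv'⟩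

theorem exists_separating (hE : IsCutRel N E) (hN : IsStrictWeakOrder M N) (hvv' : N v v') :
    ∃ m ∈ ({v, v'} : Set M), E m v' ∧ ¬ E m v := by
  rcases hE with rfl | rfl
  · exact ⟨v, by simp, hvv', hN.irrefl _⟩
  · exact ⟨v', by simp, hN.irrefl _, not_not.2 hvv'⟩

theorem definable {L : FirstOrder.Language.{u, u}} [L.Structure M] (hE : IsCutRel N E)
    (hN : DefinablePred L fun t : Fin 2 → M => N (t 0) (t 1)) :
    DefinablePred L fun t : Fin 2 → M => E (t 0) (t 1) := by
  rcases hE with rfl | rfl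
  · exact hN
  · exact (DefinablePred.comp₂ hN (DefinableMap.var 1) (DefinableMap.var 0)).not

end IsCutRel

end Cut

section TailCorrespondence

open Filter

variable {L : FirstOrder.Language.{u, u}} [L.Structure M]

/-- The final segments of `P` for the order `N` form a definable system without last element which
is o-minimal in the sense that definable sets are decided at the end of `P` and definable final
segments have an endpoint. -/
structure DefinableTail (L : FirstOrder.Language.{u, u}) [L.Structure M] (P : Set M)
    (N : M → M → Prop) : Prop where
  order : IsStrictWeakOrder M N
  nonempty : P.Nonempty
  definable_set : Set.Definable₁ (univ : Set M) L P
  definable_rel : DefinablePred L fun t : Fin 2 → M => N (t 0) (t 1)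
  exists_rel : ∀ v ∈ P, ∃ v' ∈ P, N v v'
  decided : ∀ A, Set.Definable₁ (univ : Set M) L A → Decided (tail P N) A
  exists_cut : ∀ Q ⊂ P, Set.Definable₁ (univ : Set M) L Q → Q.Nonempty →
    (∀ a ∈ Q, ∀ b ∈ P, ¬ N b a → b ∈ Q) →
      ∃ E, IsCutRel N E ∧ ∃ m ∈ P, ∀ x ∈ P, x ∈ Q ↔ E m x

theorem DefinableTail.neBot {P : Set M} {N : M → M → Prop} (h : DefinableTail L P N) :
    (tail P N).NeBot := by
  rw [neBot_iff, ne_eq, ← empty_mem_iff_bot, mem_tail h.order h.nonempty]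
  rintro ⟨v, hv, hempty⟩
  obtain ⟨x, hx, hvx⟩ := h.exists_rel v hv
  exact hempty x hx hvx

/-- A definable relation between two definable tails whose fibres over `P` are final segments of
`X` shrinking to nothing. -/
structure TailCorrespondence (L : FirstOrder.Language.{u, u}) [L.Structure M] (P : Set M)
    (N : M → M → Prop) (X : Set M) (K : M → M → Prop) (R : M → M → Prop) : Prop where
  left : DefinableTail L P N
  right : DefinableTail L X K
  definable : DefinablePred L fun t : Fin 2 → M => R (t 0) (t 1)
  antitone : ∀ v ∈ P, ∀ v' ∈ P, ∀ y ∈ X, R v y → ¬ N v v' → R v' y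
  monotone : ∀ v ∈ P, ∀ y ∈ X, ∀ y' ∈ X, R v y → ¬ K y' y → R v y'
  exists_rel : ∀ v ∈ P, ∃ y ∈ X, R v y
  exists_not_rel : ∀ y ∈ X, ∃ v ∈ P, ¬ R v y

/-- `y` is the endpoint of the fibre of `R` over `v`, included or not according to `E`. -/
def IsEndpoint (X : Set M) (R E : M → M → Prop) (v y : M) : Prop :=
  y ∈ X ∧ ∀ x ∈ X, R v x ↔ E y x

namespace TailCorrespondence

variable {P X : Set M} {N K R E : M → M → Prop}

theorem dual (T : TailCorrespondence L P N X K R) :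
    TailCorrespondence L X K P N fun y v => ¬ R v y where
  left := T.right
  right := T.left
  definable := (DefinablePred.comp₂ T.definable (DefinableMap.var 1) (DefinableMap.var 0)).not
  antitone y hy y' hy' v hv hR hK := fun hR' => hR (T.monotone v hv y' hy' y hy hR' hK)
  monotone y hy v hv v' hv' hR hN := fun hR' => hR (T.antitone v' hv' v hv y hy hR' hN)
  exists_rel := T.exists_not_rel
  exists_not_rel v hv := (T.exists_rel v hv).imp fun _ h => ⟨h.1, not_not.2 h.2⟩

theorem definable_isEndpoint (T : TailCorrespondence L P N X K R) (hE : IsCutRel K E) :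
    DefinablePred L fun t : Fin 2 → M => IsEndpoint X R E (t 0) (t 1) :=
  (DefinablePred.mem T.right.definable_set (.var 1)).and (DefinablePred.all
    ((DefinablePred.mem T.right.definable_set (.var _)).imp
      ((DefinablePred.comp₂ T.definable (.var _) (.var _)).iff
        (DefinablePred.comp₂ (hE.definable T.right.definable_rel) (.var _) (.var _)))))

theorem eventually_not_rel (T : TailCorrespondence L P N X K R) {y : M} (hy : y ∈ X) :
    ∀ᶠ v in tail P N, v ∈ P ∧ ¬ R v y := by
  obtain ⟨v₀, hv₀, hR⟩ := T.exists_not_rel y hy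
  refine (eventually_tail hv₀).mono fun v ⟨hv, hN⟩ => ⟨hv, fun hvy => ?_⟩
  exact hR (T.antitone v hv v₀ hv₀ y hy hvy fun h =>
    T.left.order.irrefl _ (T.left.order.trans _ _ _ hN h))

theorem eventually_exists_isEndpoint (T : TailCorrespondence L P N X K R) :
    ∃ E, IsCutRel K E ∧ ∀ᶠ v in tail P N, ∃ y, IsEndpoint X R E v y := by
  obtain ⟨y₀, hy₀⟩ := T.right.nonempty
  have hcut : ∀ᶠ v in tail P N, ∃ E, IsCutRel K E ∧ ∃ y, IsEndpoint X R E v y := by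
    filter_upwards [T.eventually_not_rel hy₀] with v ⟨hv, hvy₀⟩
    obtain ⟨y₁, hy₁, hvy₁⟩ := T.exists_rel v hv
    obtain ⟨E, hE, y, hy, hyE⟩ := T.right.exists_cut {y | y ∈ X ∧ R v y}
      ⟨fun y hy => hy.1, fun h => hvy₀ (h hy₀).2⟩
      ((DefinablePred.mem T.right.definable_set (.var 0)).and
        (DefinablePred.comp₂ T.definable (.const v) (.var 0)))
      ⟨y₁, hy₁, hvy₁⟩ fun a ha b hb hba => ⟨hb, T.monotone v hv a ha.1 b hb ha.2 hba⟩
    exact ⟨E, hE, y, hy, fun x hx => (and_iff_right hx).symm.trans (hyE x hx)⟩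
  rcases T.left.decided {v | ∃ y, IsEndpoint X R K v y}
    (DefinablePred.ex (DefinablePred.comp₂ (T.definable_isEndpoint (.inl rfl)) (.var _) (.var _)))
    with hK | hK
  · exact ⟨K, .inl rfl, hK⟩
  · refine ⟨_, .inr rfl, ?_⟩
    filter_upwards [hcut, hK] with v ⟨E, hE, hv⟩ hvK
    rcases hE with rfl | rfl
    · exact absurd hv hvK
    · exact hv

theorem eventually_rel_of_isEndpoint (T : TailCorrespondence L P N X K R) (hE : IsCutRel K E)
    {y₀ : M} (hy₀ : y₀ ∈ X) : ∀ᶠ v in tail P N, ∀ y, IsEndpoint X R E v y → K y₀ y := by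
  obtain ⟨y₁, hy₁, hy₀₁⟩ := T.right.exists_rel y₀ hy₀
  filter_upwards [T.eventually_not_rel hy₁] with v hv y hy
  exact hE.rel_of_not T.right.order (hE.of_rel T.right.order hy₀₁)
    fun hyy₁ => hv.2 ((hy.2 y₁ hy₁).2 hyy₁)

theorem eventually_exists_isEndpoint_of_eventually (T : TailCorrespondence L P N X K R)
    (hE : IsCutRel K E) (hend : ∀ᶠ v in tail P N, ∃ y, IsEndpoint X R E v y)
    {v₀ : M} (hv₀ : v₀ ∈ P) :
    ∀ᶠ y in tail X K, ∃ v ∈ P, N v₀ v ∧ IsEndpoint X R E v y := by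
  have := T.left.neBot
  refine (T.right.decided {y | ∃ v, v ∈ P ∧ N v₀ v ∧ IsEndpoint X R E v y} (DefinablePred.ex
    ((DefinablePred.mem T.left.definable_set (.var _)).and
      ((DefinablePred.comp₂ T.left.definable_rel (.const v₀) (.var _)).and
        (DefinablePred.comp₂ (T.definable_isEndpoint hE) (.var _) (.var _)))))).resolve_right ?_
  intro hnot
  obtain ⟨y₀, hy₀, hy₀not⟩ := (mem_tail T.right.order T.right.nonempty).1 hnot
  obtain ⟨v, ⟨⟨y, hy⟩, hlt⟩, hv, hv₀v⟩ :=
    ((hend.and (T.eventually_rel_of_isEndpoint hE hy₀)).and (eventually_tail hv₀)).exists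
  exact hy₀not y hy.1 (hlt y hy) ⟨v, hv, hv₀v, hy⟩

theorem eventually_separated (T : TailCorrespondence L P N X K R) :
    ∃ v₀ ∈ P, ∀ v ∈ P, ∀ v' ∈ P, N v₀ v → N v v' → ∃ y ∈ X, R v y ∧ ¬ R v' y := by
  obtain ⟨E, hE, hend⟩ := T.dual.eventually_exists_isEndpoint
  obtain ⟨y₀, hy₀⟩ := T.right.nonempty
  obtain ⟨v₀, hv₀, hfib⟩ := (mem_tail T.left.order T.left.nonempty).1
    (T.dual.eventually_exists_isEndpoint_of_eventually hE hend hy₀)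
  refine ⟨v₀, hv₀, fun v hv v' hv' hv₀v hvv' => ?_⟩
  obtain ⟨m, hm, hmv', hmv⟩ := hE.exists_separating T.left.order hvv'
  have hmP : m ∈ P ∧ N v₀ m := by
    rcases hm with rfl | rfl
    · exact ⟨hv, hv₀v⟩
    · exact ⟨hv', T.left.order.trans _ _ _ hv₀v hvv'⟩
  obtain ⟨y, hy, -, -, hend⟩ := hfib m hmP.1 hmP.2
  exact ⟨y, hy, not_not.1 fun h => hmv ((hend v hv).1 h), (hend v' hv').2 hmv'⟩

theorem rel_of_isEndpoint (T : TailCorrespondence L P N X K R) (hE : IsCutRel K E)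
    {v v' y y' : M} (hv : v ∈ P) (hv' : v' ∈ P) (hy : IsEndpoint X R E v y)
    (hy' : IsEndpoint X R E v' y') (hyy' : K y y') : N v v' := by
  obtain ⟨x, hx, hyx, hy'x⟩ := hE.exists_mem_and_not T.right.order hyy'
  have hxX : x ∈ X := by
    rcases hx with rfl | rfl
    · exact hy.1
    · exact hy'.1
  by_contra hvv'
  exact hy'x ((hy'.2 x hxX).1 (T.antitone v hv v' hv' x hxX ((hy.2 x hxX).2 hyx) hvv'))

theorem exists_matching (T : TailCorrespondence L P N X K R) :
    ∃ S : M → M → Prop, (DefinablePred L fun t : Fin 2 → M => S (t 0) (t 1)) ∧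
      ∃ v₀ ∈ P, ∃ y₀ ∈ X,
        (∀ v ∈ P, N v₀ v → ∃ y ∈ X, K y₀ y ∧ S v y) ∧
        (∀ y ∈ X, K y₀ y → ∃ v ∈ P, N v₀ v ∧ S v y) ∧
        ∀ v ∈ P, ∀ v' ∈ P, N v₀ v → ∀ y y', S v y → S v' y' → (N v v' ↔ K y y') := by
  obtain ⟨E, hE, hend⟩ := T.eventually_exists_isEndpoint
  obtain ⟨v₁, hv₁, hsep⟩ := T.eventually_separated
  have hrel : ∀ v ∈ P, ∀ v' ∈ P, N v₁ v → ∀ y y', IsEndpoint X R E v y →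
      IsEndpoint X R E v' y' → (N v v' ↔ K y y') := by
    refine fun v hv v' hv' hv₁v y y' hy hy' =>
      ⟨fun hvv' => ?_, T.rel_of_isEndpoint hE hv hv' hy hy'⟩
    obtain ⟨x, hx, hvx, hv'x⟩ := hsep v hv v' hv' hv₁v hvv'
    exact hE.rel_of_not T.right.order ((hy.2 x hx).1 hvx) fun h => hv'x ((hy'.2 x hx).2 h)
  obtain ⟨y₁, hy₁, hsurj⟩ := (mem_tail T.right.order T.right.nonempty).1
    (T.eventually_exists_isEndpoint_of_eventually hE hend hv₁)
  obtain ⟨v₂, hv₂, hend⟩ := (mem_tail T.left.order T.left.nonempty).1 hend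
  have := T.left.neBot
  obtain ⟨v₀, ⟨⟨hv₀, hv₁₀⟩, -, hv₂₀⟩, hlt⟩ := (((eventually_tail hv₁).and
    (eventually_tail hv₂)).and (T.eventually_rel_of_isEndpoint hE hy₁)).exists
  obtain ⟨y₀, hy₀⟩ := hend v₀ hv₀ hv₂₀
  refine ⟨IsEndpoint X R E, T.definable_isEndpoint hE, v₀, hv₀, y₀, hy₀.1,
    fun v hv hv₀v => ?_, fun y hy hy₀y => ?_, fun v hv v' hv' hv₀v =>
      hrel v hv v' hv' (T.left.order.trans _ _ _ hv₁₀ hv₀v)⟩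
  · obtain ⟨y, hy⟩ := hend v hv (T.left.order.trans _ _ _ hv₂₀ hv₀v)
    exact ⟨y, hy.1, (hrel v₀ hv₀ v hv hv₁₀ y₀ y hy₀ hy).1 hv₀v, hy⟩
  · obtain ⟨v, hv, -, hvy⟩ := hsurj y hy (T.right.order.trans _ _ _ (hlt y₀ hy₀) hy₀y)
    exact ⟨v, hv, (hrel v₀ hv₀ v hv hv₁₀ y₀ y hy₀ hvy).2 hy₀y, hvy⟩

end TailCorrespondence

end TailCorrespondence

section DefinableTails

open Filter

variable {L : FirstOrder.Language.{u, u}} [L.Structure M] {r : L.Relations 3}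

namespace CMinimal

theorem qfDef (hmin : CMinimal L M r) {s : Set M} (hs : Set.Definable₁ (univ : Set M) L s) :
    QFDef (interpC L M r) s :=
  hmin M inferInstance rfl s hs

theorem exists_cut_below (hC : IsCRelation (interpC L M r)) (hmin : CMinimal L M r) {u p : M}
    {Q : Set M} (hQ : Q ⊂ {y | interpC L M r y p u}) (hQdef : Set.Definable₁ (univ : Set M) L Q)
    (hQne : Q.Nonempty)
    (hupper : ∀ a ∈ Q, ∀ b, interpC L M r b p u → ¬ interpC L M r b a u → b ∈ Q) :
    ∃ E, IsCutRel (fun a b => interpC L M r a b u) E ∧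
      ∃ m, interpC L M r m p u ∧ ∀ x, interpC L M r x p u → (x ∈ Q ↔ E m x) := by
  obtain ⟨hQP, hPQ⟩ := hQ
  obtain ⟨b₀, hb₀P, hb₀Q⟩ := not_subset.1 hPQ
  obtain ⟨q, hq⟩ := hQne
  have hout : ∀ a, ¬ interpC L M r a p u → ∀ z, interpC L M r z p u → interpC L M r z a u :=
    fun a ha z hz =>
      (rel_or_rel_of_isStrictWeakOrder (hC.isStrictWeakOrder u) hz a).resolve_right ha
  have hconv : ∀ a, a ∈ Q ∨ ¬ interpC L M r a p u → ∀ z, ¬ interpC L M r z u a →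
      z ∈ Q ∨ ¬ interpC L M r z p u := fun a ha z hza => by
    have hza' : ¬ interpC L M r z a u := fun hz => hza (hC.symm hz)
    refine or_iff_not_imp_right.2 fun hzP => ?_
    rcases ha with ha | ha
    · exact hupper a ha z (not_not.1 hzP) hza'
    · exact absurd (hout a ha z (not_not.1 hzP)) hza'
  rcases (hmin.qfDef (s := {z | z ∈ Q ∨ ¬ interpC L M r z p u})
    ((DefinablePred.mem hQdef (.var 0)).or (DefinablePred.interpC r (.var 0) (.const p)
      (.const u)).not)).eq_ball_of_convex hC (.inr (hC.irrefl_right u p))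
    (not_or.2 ⟨hb₀Q, not_not.2 hb₀P⟩) hconv with ⟨a, -, heq⟩ | ⟨b, hb, heq⟩
  · have hball : ∀ x, interpC L M r x p u → (x ∈ Q ↔ ¬ interpC L M r x a u) := fun x hx => by
      have := Set.ext_iff.1 heq x
      grind [hC.symm]
    refine ⟨_, .inr rfl, a, ?_, hball⟩
    by_contra haP
    exact (hball q (hQP hq)).1 hq (hout a haP q (hQP hq))
  · refine ⟨_, .inl rfl, b, not_not.1 (not_or.1 hb).2, fun x hx => ?_⟩
    have := Set.ext_iff.1 heq x
    grind

/-- Here `y` stands for the node `u ∧ y` of the branch of `u`, ordered as in the branch. -/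
theorem definableTail_below (hC : IsCRelation (interpC L M r)) (hmin : CMinimal L M r)
    {u p : M} (hne : ∃ y, interpC L M r y p u)
    (hlim : ∀ v, interpC L M r v p u → ∃ v', interpC L M r v' p u ∧ interpC L M r v v' u) :
    DefinableTail L {y | interpC L M r y p u} fun a b => interpC L M r a b u where
  order := hC.isStrictWeakOrder u
  nonempty := hne
  definable_set := DefinablePred.interpC r (.var 0) (.const p) (.const u)
  definable_rel := DefinablePred.interpC r (.var 0) (.var 1) (.const u)
  exists_rel := hlim
  decided A hA := by
    obtain ⟨y, hy⟩ := hne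
    refine (hmin.qfDef hA).decided_of_cut hC (u := u) (D := {a | ¬ interpC L M r a p u})
      (fun a ha => ?_) fun a ha => ?_
    · filter_upwards [eventually_tail (P := {y | interpC L M r y p u}) hy] with z hz
      exact (rel_or_rel_of_isStrictWeakOrder (hC.isStrictWeakOrder u) hz.1 a).resolve_right ha
    · filter_upwards [eventually_tail (P := {y | interpC L M r y p u}) (not_not.1 ha)] with z hz
      exact hz.2
  exists_cut _ hQ hQdef hQne hupper := hmin.exists_cut_below hC hQ hQdef hQne hupper

theorem definableTail_ne [Nontrivial M] (hC : IsCRelation (interpC L M r)) (hmin : CMinimal L M r)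
    (e : M) : DefinableTail L {x | x ≠ e} fun a b => interpC L M r a b e := by
  have hbelow := hmin.definableTail_below hC (u := e) (p := e)
  simp only [hC.rel_self_right] at hbelow
  exact hbelow (exists_ne e) fun v hv => hC.exists_closer hv

theorem exists_cut_above (hC : IsCRelation (interpC L M r)) (hmin : CMinimal L M r) {u b : M}
    {Q : Set M} (hQ : Q ⊂ {y | y ≠ u ∧ interpC L M r b y u})
    (hQdef : Set.Definable₁ (univ : Set M) L Q) (hQne : Q.Nonempty)
    (hupper : ∀ a ∈ Q, ∀ c, c ≠ u ∧ interpC L M r b c u → ¬ interpC L M r a c u → c ∈ Q) :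
    ∃ E, IsCutRel (fun a c => interpC L M r c a u) E ∧
      ∃ m, (m ≠ u ∧ interpC L M r b m u) ∧
        ∀ x, x ≠ u ∧ interpC L M r b x u → (x ∈ Q ↔ E m x) := by
  have hsplit : ∀ x y z, interpC L M r x z u → interpC L M r x y u ∨ interpC L M r y z u :=
    fun x y z hx => rel_or_rel_of_isStrictWeakOrder (hC.isStrictWeakOrder u) hx y
  obtain ⟨hQP, hPQ⟩ := hQ
  obtain ⟨b₀, hb₀P, hb₀Q⟩ := not_subset.1 hPQ
  obtain ⟨q, hq⟩ := hQne
  have huQ : u ∉ Q := fun hu => (hQP hu).1 rfl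
  have hconv : ∀ a, interpC L M r b a u ∧ a ∉ Q → ∀ z, ¬ interpC L M r z u a →
      interpC L M r b z u ∧ z ∉ Q := fun a ha z hza => by
    have hzu : z ∈ Q → z ≠ u := fun hz => (hQP hz).1
    grind [hC.symm, hC.rel_self_right]
  rcases (hmin.qfDef (s := {z | interpC L M r b z u ∧ z ∉ Q})
    ((DefinablePred.interpC r (.const b) (.var 0) (.const u)).and
      (DefinablePred.mem hQdef (.var 0)).not)).eq_ball_of_convex hC
    ⟨hC.rel_self_right.2 (hC.ne_right hb₀P.2), huQ⟩ (fun hqK => hqK.2 hq) hconv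
    with ⟨a, ha, heq⟩ | ⟨m, hm, heq⟩
  · refine ⟨_, .inl rfl, a, ⟨?_, ha.1⟩, fun x hx => ?_⟩
    · rintro rfl
      have := Set.ext_iff.1 heq b₀
      grind [hC.rel_self_right]
    · have := Set.ext_iff.1 heq x
      grind [hC.symm]
  · have hball : ∀ x, interpC L M r b x u → (x ∈ Q ↔ ¬ interpC L M r m x u) := fun x hx => by
      have := Set.ext_iff.1 heq x
      grind
    have hmP : interpC L M r b m u :=
      (hsplit _ _ _ (hQP hq).2).resolve_right ((hball q (hQP hq).2).1 hq)
    exact ⟨_, .inr rfl, m, ⟨fun hmu => hm ⟨hmP, hmu ▸ huQ⟩, hmP⟩, fun x hx => hball x hx.2⟩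

/-- Here `y` stands for the node `u ∧ y` of the branch of `u`, ordered opposite to the branch. -/
theorem definableTail_above (hC : IsCRelation (interpC L M r)) (hmin : CMinimal L M r)
    {u b : M} (hne : ∃ y, y ≠ u ∧ interpC L M r b y u)
    (hlim : ∀ v, v ≠ u ∧ interpC L M r b v u →
      ∃ v', (v' ≠ u ∧ interpC L M r b v' u) ∧ interpC L M r v' v u) :
    DefinableTail L {y | y ≠ u ∧ interpC L M r b y u} fun a c => interpC L M r c a u where
  order :=
    have := hC.isStrictWeakOrder u
    inferInstanceAs (IsStrictWeakOrder M (Function.swap fun a c => interpC L M r a c u))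
  nonempty := hne
  definable_set := (DefinablePred.ne (.var 0) (.const u)).and
    (DefinablePred.interpC r (.const b) (.var 0) (.const u))
  definable_rel := DefinablePred.interpC r (.var 1) (.var 0) (.const u)
  exists_rel := hlim
  decided A hA := by
    have htail := fun v hv => eventually_tail (P := {y | y ≠ u ∧ interpC L M r b y u})
      (N := fun a c => interpC L M r c a u) (v := v) hv
    obtain ⟨y, hy⟩ := hne
    refine (hmin.qfDef hA).decided_of_cut hC (u := u) (D := {a | interpC L M r b a u})
      (fun a ha => ?_) fun a ha => (htail y hy).mono fun z hz => ?_
    · by_cases hau : a = u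
      · exact (htail y hy).mono fun z hz => hau ▸ hC.rel_self_right.2 (hau ▸ hz.1.1)
      · exact (htail a ⟨hau, ha⟩).mono fun z hz => hz.2
    · exact (rel_or_rel_of_isStrictWeakOrder (hC.isStrictWeakOrder u) hz.1.2 a).resolve_left ha
  exists_cut _ hQ hQdef hQne hupper := hmin.exists_cut_above hC hQ hQdef hQne hupper

end CMinimal

end DefinableTails

section NoBijection

open Filter

variable {L : FirstOrder.Language.{u, u}} [L.Structure M] {r : L.Relations 3}

theorem exists_rel_of_tendsto_tail {l : Filter M} [l.NeBot] {P : Set M} {N : M → M → Prop}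
    {w : M → M} (hw : Tendsto w l (tail P N)) {v : M} (hv : v ∈ P) : ∃ v' ∈ P, N v v' :=
  let ⟨x, hx⟩ := (hw.eventually (eventually_tail hv)).exists
  ⟨w x, hx⟩

/-- The relation `R v y` between nodes `v` of `P` and nodes `e ∧ y` saying that `w` is past `v` on
the punctured ball `e ∧ y`. -/
def PastOn (C : M → M → M → Prop) (e : M) (w : M → M) (P : Set M) (N : M → M → Prop)
    (v y : M) : Prop :=
  ∀ x, x ≠ e → ¬ C x y e → w x ∈ P ∧ N v (w x)

theorem CMinimal.tailCorrespondence_pastOn [Nontrivial M] (hC : IsCRelation (interpC L M r))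
    (hmin : CMinimal L M r) {e : M} {w : M → M} (hw : DefinableMap L fun t : Fin 1 → M => w (t 0))
    {P : Set M} {N : M → M → Prop} (hT : DefinableTail L P N)
    (hlim : Tendsto w (near (interpC L M r) e) (tail P N)) :
    TailCorrespondence L P N {y | y ≠ e} (fun a b => interpC L M r a b e)
      (PastOn (interpC L M r) e w P N) where
  left := hT
  right := hmin.definableTail_ne hC e
  definable := DefinablePred.all ((DefinablePred.ne (.var _) (.const e)).imp
    ((DefinablePred.interpC r (.var _) (.var _) (.const e)).not.imp
      ((DefinablePred.mem hT.definable_set (hw.comp (.var _))).and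
        (DefinablePred.comp₂ hT.definable_rel (.var _) (hw.comp (.var _))))))
  antitone v _ v' _ y _ hR hvv' x hx hxy :=
    ⟨(hR x hx hxy).1,
      (rel_or_rel_of_isStrictWeakOrder hT.order (hR x hx hxy).2 v').resolve_left hvv'⟩
  monotone v _ y _ y' _ hR hy'y x hx hxy' := hR x hx fun hxy =>
    (rel_or_rel_of_isStrictWeakOrder (hC.isStrictWeakOrder e) hxy y').elim hxy' hy'y
  exists_rel v hv := by
    obtain ⟨y₀, hy₀, hpast⟩ := (mem_near hC).1 (hlim.eventually (eventually_tail hv))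
    obtain ⟨y, hy, hy₀y⟩ := hC.exists_closer hy₀
    exact ⟨y, hy, fun x hx hxy => hpast x hx
      ((rel_or_rel_of_isStrictWeakOrder (hC.isStrictWeakOrder e) hy₀y x).resolve_right hxy)⟩
  exists_not_rel y hy := by
    by_cases hyP : w y ∈ P
    · exact ⟨w y, hyP, fun hR => hT.order.irrefl _ (hR y hy (hC.irrefl y e)).2⟩
    · obtain ⟨v, hv⟩ := hT.nonempty
      exact ⟨v, hv, fun hR => hyP (hR y hy (hC.irrefl y e)).1⟩

theorem NB.false_of_matching (hC : IsCRelation (interpC L M r)) (hNB : NB L M r)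
    {u lo hi c e : M} (hhi : hi ≠ u) (hc : c ≠ e) {I J : Set M}
    (hI : I = {s | interpC L M r lo s u ∧ interpC L M r s hi u})
    (hJ : J = {t | interpC L M r c t e ∧ t ≠ e}) {S : M → M → Prop}
    (hS : DefinablePred L fun t : Fin 2 → M => S (t 0) (t 1))
    (htotal : ∀ s ∈ I, ∃ t ∈ J, S s t) (hsurj : ∀ t ∈ J, ∃ s ∈ I, S s t)
    (hnode : ∀ s ∈ I, ∀ s' ∈ I, ∀ t t', S s t → S s' t' →
      (node (interpC L M r) u s = node (interpC L M r) u s' ↔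
        node (interpC L M r) e t = node (interpC L M r) e t')) : False := by
  have hmemI : ∀ B, B ∈ branchInterval (interpC L M r) u (some lo) hi ↔
      ∃ s ∈ I, B = node (interpC L M r) u s := fun B => by
    rw [mem_branchInterval_some hC, hI]
    exact exists_congr fun s => and_comm
  have hmemJ : ∀ B, B ∈ branchInterval (interpC L M r) e (some c) e ↔
      ∃ t ∈ J, B = node (interpC L M r) e t := fun B => by
    simp only [mem_branchInterval_some hC, hJ, hC.rel_self_right]
    exact exists_congr fun s => and_comm
  have hdefI : Set.Definable₁ (univ : Set M) L I := hI ▸ DefinablePred.and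
    (.interpC r (.const lo) (.var 0) (.const u)) (.interpC r (.var 0) (.const hi) (.const u))
  have hdefJ : Set.Definable₁ (univ : Set M) L J := hJ ▸ DefinablePred.and
    (.interpC r (.const c) (.var 0) (.const e)) (.ne (.var 0) (.const e))
  refine hNB u e {t | (t 0 ∈ I ∧ t 1 ∈ J) ∧ S (t 0) (t 1)}
    (((DefinablePred.mem hdefI (.var 0)).and (DefinablePred.mem hdefJ (.var 1))).and hS) _ _
    ⟨lo, hi, rfl, fun hleaf => hhi ((isLeafSet_node hC).1 hleaf)⟩
    (isUnboundedInterval_leaf hC hc) ⟨?_, fun B hB => ?_, fun B hB => ?_⟩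
  · rintro _ _ ⟨s, t, ⟨⟨hs, ht⟩, -⟩, rfl, rfl⟩
    exact ⟨(hmemI _).2 ⟨s, hs, rfl⟩, (hmemJ _).2 ⟨t, ht, rfl⟩⟩
  · obtain ⟨s, hs, rfl⟩ := (hmemI _).1 hB
    obtain ⟨t, ht, hst⟩ := htotal s hs
    refine ⟨_, ⟨(hmemJ _).2 ⟨t, ht, rfl⟩, s, t, ⟨⟨hs, ht⟩, hst⟩, rfl, rfl⟩, ?_⟩
    rintro _ ⟨-, s', t', ⟨⟨hs', -⟩, hst'⟩, heq, rfl⟩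
    exact ((hnode s hs s' hs' t t' hst hst').1 heq).symm
  · obtain ⟨t, ht, rfl⟩ := (hmemJ _).1 hB
    obtain ⟨s, hs, hst⟩ := hsurj t ht
    refine ⟨_, ⟨(hmemI _).2 ⟨s, hs, rfl⟩, s, t, ⟨⟨hs, ht⟩, hst⟩, rfl, rfl⟩, ?_⟩
    rintro _ ⟨-, s', t', ⟨⟨hs', -⟩, hst'⟩, rfl, heq⟩
    exact ((hnode s hs s' hs' t t' hst hst').2 heq).symm

theorem NB.not_tendsto_tail [Nontrivial M] (hC : IsCRelation (interpC L M r))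
    (hmin : CMinimal L M r) (hNB : NB L M r) {e u : M} {P : Set M} {N : M → M → Prop}
    (hT : DefinableTail L P N)
    (hbdd : ∀ v ∈ P, ∃ lo hi, hi ≠ u ∧
      {s | s ∈ P ∧ N v s} = {s | interpC L M r lo s u ∧ interpC L M r s hi u})
    (hnode : ∀ a b, node (interpC L M r) u a = node (interpC L M r) u b ↔ ¬ N a b ∧ ¬ N b a)
    {w : M → M} (hw : DefinableMap L fun t : Fin 1 → M => w (t 0)) :
    ¬ Tendsto w (near (interpC L M r) e) (tail P N) := by
  intro hlim
  obtain ⟨S, hS, v₀, hv₀, y₀, hy₀, htotal, hsurj, hiff⟩ :=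
    (hmin.tailCorrespondence_pastOn hC hw hT hlim).exists_matching
  obtain ⟨lo, hi, hhi, hI⟩ := hbdd v₀ hv₀
  refine NB.false_of_matching hC hNB hhi hy₀ hI rfl hS (fun s hs => ?_) (fun t ht => ?_)
    fun s hs s' hs' t t' hst hst' => ?_
  · obtain ⟨y, hy, hy₀y, hsy⟩ := htotal s hs.1 hs.2
    exact ⟨y, ⟨hy₀y, hy⟩, hsy⟩
  · obtain ⟨v, hv, hv₀v, hvt⟩ := hsurj t ht.2 ht.1
    exact ⟨v, ⟨hv, hv₀v⟩, hvt⟩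
  · rw [hnode, node_eq_node hC, hiff s hs.1 s' hs'.1 hs.2 t t' hst hst',
      hiff s' hs'.1 s hs.1 hs'.2 t' t hst' hst]

theorem NB.not_tendsto_tail_below [Nontrivial M] (hC : IsCRelation (interpC L M r))
    (hmin : CMinimal L M r) (hNB : NB L M r) {e u p : M} (hp : p ≠ u)
    (hne : ∃ y, interpC L M r y p u) {w : M → M}
    (hw : DefinableMap L fun t : Fin 1 → M => w (t 0)) :
    ¬ Tendsto w (near (interpC L M r) e)
      (tail {y | interpC L M r y p u} fun a b => interpC L M r a b u) := by
  intro hlim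
  have := near_neBot hC e
  refine NB.not_tendsto_tail hC hmin hNB
    (hmin.definableTail_below hC hne fun v hv => exists_rel_of_tendsto_tail hlim hv)
    (fun v _ => ⟨v, p, hp, Set.ext fun s => and_comm⟩) (fun a b => node_eq_node hC) hw hlim

theorem NB.not_tendsto_tail_above [Nontrivial M] (hC : IsCRelation (interpC L M r))
    (hmin : CMinimal L M r) (hNB : NB L M r) {e u b : M}
    (hne : ∃ y, y ≠ u ∧ interpC L M r b y u) {w : M → M}
    (hw : DefinableMap L fun t : Fin 1 → M => w (t 0)) :
    ¬ Tendsto w (near (interpC L M r) e)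
      (tail {y | y ≠ u ∧ interpC L M r b y u} fun a c => interpC L M r c a u) := by
  intro hlim
  have := near_neBot hC e
  refine NB.not_tendsto_tail hC hmin hNB
    (hmin.definableTail_above hC hne fun v hv => exists_rel_of_tendsto_tail hlim hv)
    (fun v hv => ⟨b, v, hv.1, Set.ext fun s => ?_⟩)
    (fun a b => (node_eq_node hC).trans and_comm) hw hlim
  exact ⟨fun hs => ⟨hs.1.2, hs.2⟩, fun hs => ⟨⟨hC.ne_right hs.2, hs.1⟩, hs.2⟩⟩

end NoBijection

section Generic

open Filter

variable {C : M → M → M → Prop} {p q : M}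

/-- Two elements of the closed ball `p ∧ q` lie in the same maximal proper subcone of this ball. -/
def SameCone (C : M → M → M → Prop) (p q a b : M) : Prop := C p a b ∨ C q a b

theorem SameCone.refl (h : IsCRelation C) (hpq : p ≠ q) (a : M) : SameCone C p q a a := by
  simp only [SameCone, h.rel_self_right]
  grind

theorem SameCone.symm (h : IsCRelation C) {a b : M} (hab : SameCone C p q a b) :
    SameCone C p q b a :=
  hab.imp h.symm h.symm

theorem SameCone.trans (h : IsCRelation C) {a b c : M} (hab : SameCone C p q a b)
    (hbc : SameCone C p q b c) : SameCone C p q a c := by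
  unfold SameCone at *
  grind [h.symm, h.asymm, h.split]

/-- A filter is generic in the closed ball `p ∧ q` if it contains this ball and the complement of
each maximal proper subcone of it. -/
def IsGeneric (C : M → M → M → Prop) (p q : M) (l : Filter M) : Prop :=
  (∀ᶠ z in l, z ∈ node C p q) ∧ ∀ t ∈ node C p q, ∀ᶠ z in l, ¬ SameCone C p q t z

/-- A sequence of elements of the closed ball `p ∧ q` in pairwise distinct maximal proper subcones
of this ball. -/
def IsScattered (C : M → M → M → Prop) (p q : M) (z : ℕ → M) : Prop :=
  (∀ i, z i ∈ node C p q) ∧ Pairwise fun i j => ¬ SameCone C p q (z i) (z j)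

theorem IsGeneric.sup {l l' : Filter M} (hl : IsGeneric C p q l) (hl' : IsGeneric C p q l') :
    IsGeneric C p q (l ⊔ l') :=
  ⟨eventually_sup.2 ⟨hl.1, hl'.1⟩, fun t ht => eventually_sup.2 ⟨hl.2 t ht, hl'.2 t ht⟩⟩

theorem IsGeneric.decided (h : IsCRelation C) (hpq : p ≠ q) {l : Filter M}
    (hl : IsGeneric C p q l) {A : Set M} (hA : QFDef C A) : Decided l A := by
  have hgen : ∀ a, ∀ᶠ z in l, a ∈ node C p q → ¬ SameCone C p q a z := fun a => by
    by_cases ha : a ∈ node C p q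
    · exact (hl.2 a ha).mono fun _ hz _ => hz
    · exact Eventually.of_forall fun _ ha' => absurd ha' ha
  refine hA.decided h (fun a => ?_) (fun a b => ?_) fun a b => ?_
  · filter_upwards [hl.1, hgen a] with z hz ha
    rintro rfl
    exact ha hz (SameCone.refl h hpq z)
  · refine decided_of_eventually_iff
      (p := ¬ C a p q ∧ ¬ C b p q ∧ SameCone C p q a b ∨ C a p q ∧ C b p q ∧ C p a b) ?_
    filter_upwards [hl.1, hgen a, hgen b] with z hz ha hb
    simp only [SameCone, node, mem_ofPred_eq] at hz ha hb ⊢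
    grind [h.symm, h.asymm, h.split]
  · refine decided_of_eventually_iff (p := C a p q ∧ C a p b) ?_
    filter_upwards [hl.1, hgen a, hgen b] with z hz ha hb
    simp only [SameCone, node, mem_ofPred_eq] at hz ha hb
    grind [h.symm, h.asymm, h.split]

theorem IsScattered.isGeneric (h : IsCRelation C) {z : ℕ → M} (hz : IsScattered C p q z) :
    IsGeneric C p q (map z atTop) := by
  refine ⟨eventually_map.2 (Eventually.of_forall hz.1), fun t _ => ?_⟩
  have hsub : {i | SameCone C p q t (z i)}.Subsingleton := fun i hi j hj => by
    by_contra hij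
    exact hz.2 hij ((SameCone.symm h hi).trans h hj)
  rw [eventually_map, ← Nat.cofinite_eq_atTop]
  exact hsub.finite.compl_mem_cofinite

theorem IsGeneric.exists_isScattered (h : IsCRelation C) {l : Filter M} [l.NeBot]
    (hl : IsGeneric C p q l) {A : Set M} (hA : A ∈ l) :
    ∃ z, IsScattered C p q z ∧ ∀ i, z i ∈ A := by
  have : Std.Symm fun a b => ¬ SameCone C p q a b := ⟨fun a b hab hba => hab (hba.symm h)⟩
  obtain ⟨z, hz, hdistinct⟩ := exists_seq_of_forall_finset_exists'
    (fun a => a ∈ node C p q ∧ a ∈ A) (fun a b => ¬ SameCone C p q a b) fun F hF =>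
      ((hl.1.and hA).and ((eventually_all_finset F).2 fun a ha => hl.2 a (hF a ha).1)).exists
  exact ⟨z, ⟨fun i => (hz i).1, hdistinct⟩, fun i => (hz i).2⟩

end Generic

section UltraPower

open Filter

/-- The ultrapower of `M` with respect to a nonprincipal ultrafilter on `ℕ`. -/
abbrev UltraPower (M : Type u) : Type u := (hyperfilter ℕ : Filter ℕ).Product fun _ => M

namespace UltraPower

variable {L : FirstOrder.Language.{u, u}} [L.Structure M] {r : L.Relations 3}

/-- The class of a sequence in the ultrapower. -/
noncomputable def mk (x : ℕ → M) : UltraPower M :=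
  (x : (hyperfilter ℕ : Filter ℕ).Product fun _ => M)

theorem exists_mk (a : UltraPower M) : ∃ x, mk x = a := Quotient.exists_rep a

theorem mk_eq_mk {x y : ℕ → M} : mk x = mk y ↔ ∀ᶠ n in hyperfilter ℕ, x n = y n := Quotient.eq''

theorem realize_mk [Nonempty M] {β : Type*} (φ : L.Formula β) (x : β → ℕ → M) :
    (φ.Realize fun i => mk (x i)) ↔ ∀ᶠ n in hyperfilter ℕ, φ.Realize fun i => x i n :=
  Language.Ultraproduct.realize_formula_cast φ x

theorem interpC_mk {x y z : ℕ → M} :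
    interpC L (UltraPower M) r (mk x) (mk y) (mk z) ↔
      ∀ᶠ n in hyperfilter ℕ, interpC L M r (x n) (y n) (z n) := by
  have : Nonempty M := ⟨x 0⟩
  have hr := realize_mk (r.formula fun i : Fin 3 => Language.Term.var i) ![x, y, z]
  have hmk : (fun i => mk (![x, y, z] i)) = ![mk x, mk y, mk z] := by
    ext i
    fin_cases i <;> rfl
  have hval : ∀ n, (fun i => ![x, y, z] i n) = ![x n, y n, z n] := fun n => by
    ext i
    fin_cases i <;> rfl
  simp only [Language.Formula.realize_rel, Language.Term.realize_var, hmk, hval] at hr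
  exact hr

theorem elementarilyEquivalent [Nonempty M] : L.ElementarilyEquivalent M (UltraPower M) :=
  Language.elementarilyEquivalent_iff.2 fun φ => by
    rw [Language.Ultraproduct.sentence_realize, Filter.eventually_const]

theorem isCRelation (h : IsCRelation (interpC L M r)) :
    IsCRelation (interpC L (UltraPower M) r) := by
  refine ⟨fun a b c => ?_, fun a b c => ?_, fun a b c d => ?_, fun a b => ?_⟩ <;>
    obtain ⟨x, rfl⟩ := exists_mk a <;> obtain ⟨y, rfl⟩ := exists_mk b
  · obtain ⟨z, rfl⟩ := exists_mk c
    simp only [interpC_mk]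
    exact fun hx => hx.mono fun n => h.symm
  · obtain ⟨z, rfl⟩ := exists_mk c
    simp only [interpC_mk, ← Ultrafilter.eventually_not]
    exact fun hx => hx.mono fun n => h.asymm
  · obtain ⟨z, rfl⟩ := exists_mk c
    obtain ⟨t, rfl⟩ := exists_mk d
    simp only [interpC_mk, ← Ultrafilter.eventually_or]
    exact fun hx => hx.mono fun n hn => h.split hn (t n)
  · rw [ne_eq, mk_eq_mk, ← Ultrafilter.eventually_not]
    intro hxy
    have hcloser : ∀ n, ∃ z, x n ≠ y n → z ≠ y n ∧ interpC L M r (x n) (y n) z := fun n => by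
      by_cases hn : x n = y n
      · exact ⟨x n, fun h => absurd hn h⟩
      · exact (h.2.2.2 _ _ hn).imp fun z hz _ => hz
    choose z hz using hcloser
    refine ⟨mk z, ?_, interpC_mk.2 (hxy.mono fun n hn => (hz n hn).2)⟩
    rw [ne_eq, mk_eq_mk, ← Ultrafilter.eventually_not]
    exact hxy.mono fun n hn => (hz n hn).1

theorem isScattered_mk {p q : M} {y : ℕ → ℕ → M} (hy : ∀ n, IsScattered (interpC L M r) p q (y n)) :
    IsScattered (interpC L (UltraPower M) r) (mk fun _ => p) (mk fun _ => q)
      fun i => mk fun n => y n i := by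
  refine ⟨fun i => ?_, fun i j hij => ?_⟩
  · change ¬ _
    rw [interpC_mk, ← Ultrafilter.eventually_not]
    exact Eventually.of_forall fun n => (hy n).1 i
  · simp only [SameCone, interpC_mk, ← Ultrafilter.eventually_or, ← Ultrafilter.eventually_not]
    exact Eventually.of_forall fun n => (hy n).2 hij

theorem exists_definable_mk_mem_iff [Nonempty M] {A : M → Set M}
    (hA : DefinablePred L fun t : Fin 2 → M => t 1 ∈ A (t 0)) (s : ℕ → M) :
    ∃ A' : Set (UltraPower M), Set.Definable₁ (univ : Set (UltraPower M)) L A' ∧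
      ∀ x, mk x ∈ A' ↔ ∀ᶠ n in hyperfilter ℕ, x n ∈ A (s n) := by
  obtain ⟨φ, hφ⟩ := Set.definable_iff_exists_formula_sum.1 hA
  let val (b : UltraPower M) : (univ : Set M) ⊕ Fin 2 → UltraPower M :=
    Sum.elim (fun a => mk fun _ => (a : M)) ![mk s, b]
  refine ⟨{b | φ.Realize (val b)}, ?_, fun x => ?_⟩
  · refine Set.definable_iff_exists_formula_sum.2 ⟨φ.relabel (Sum.elim
      (fun a : (univ : Set M) => Sum.inl ⟨mk fun _ => (a : M), mem_univ _⟩)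
      ![Sum.inl ⟨mk s, mem_univ _⟩, Sum.inr 0]), Set.ext fun t => ?_⟩
    simp only [Set.mem_ofPred_eq, Language.Formula.realize_relabel]
    refine iff_of_eq (congrArg φ.Realize (funext fun i => ?_))
    rcases i with i | i
    · rfl
    · fin_cases i <;> rfl
  · let seq : (univ : Set M) ⊕ Fin 2 → ℕ → M := Sum.elim (fun a _ => (a : M)) ![s, x]
    have hmk : val (mk x) = fun i => mk (seq i) := by
      ext (i | i)
      · rfl
      · fin_cases i <;> rfl
    have hseq : ∀ n, Sum.elim (fun a : (univ : Set M) => (a : M)) ![s n, x n] =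
        fun i => seq i n := fun n => by
      ext (i | i)
      · rfl
      · fin_cases i <;> rfl
    calc φ.Realize (val (mk x)) ↔ ∀ᶠ n in hyperfilter ℕ, φ.Realize fun i => seq i n := by
          rw [hmk, realize_mk]
      _ ↔ ∀ᶠ n in hyperfilter ℕ, x n ∈ A (s n) :=
          eventually_congr (Eventually.of_forall fun n =>
            hseq n ▸ (Set.ext_iff.1 hφ ![s n, x n]).symm)

end UltraPower

namespace CMinimal

variable {L : FirstOrder.Language.{u, u}} [L.Structure M] {r : L.Relations 3} {p q : M}

/- In the ultrapower, the filters generated by `z` and by the diagonal of the `y n` are both generic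
in the same ball, so C-minimality prevents a definable set from separating them. -/
theorem exists_le_mem_of_isScattered (hC : IsCRelation (interpC L M r)) (hmin : CMinimal L M r)
    (hpq : p ≠ q) {A : M → Set M} (hA : DefinablePred L fun t : Fin 2 → M => t 1 ∈ A (t 0))
    {s z : ℕ → M} {y : ℕ → ℕ → M} (hz : IsScattered (interpC L M r) p q z)
    (hy : ∀ n, IsScattered (interpC L M r) p q (y n)) (hyA : ∀ n i, y n i ∈ A (s n)) :
    ∃ n, ∃ i ≤ n, z i ∈ A (s n) := by
  have : Nonempty M := ⟨p⟩
  have hC' := UltraPower.isCRelation hC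
  obtain ⟨A', hA', hmem⟩ := UltraPower.exists_definable_mk_mem_iff hA s
  have hne : (UltraPower.mk fun _ => p) ≠ UltraPower.mk fun _ => q := by
    rwa [ne_eq, UltraPower.mk_eq_mk, Filter.eventually_const]
  have hgen := ((UltraPower.isScattered_mk fun _ => hz).isGeneric hC').sup
    ((UltraPower.isScattered_mk hy).isGeneric hC')
  rcases hgen.decided hC' hne (hmin _ _ UltraPower.elementarilyEquivalent A' hA') with hev | hev
  · obtain ⟨i, hi⟩ := (Filter.eventually_map.1 (Filter.mem_sup.1 hev).1).exists
    obtain ⟨n, hin, hn⟩ := (((eventually_ge_atTop i).filter_mono Nat.hyperfilter_le_atTop).and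
      ((hmem _).1 hi)).exists
    exact ⟨n, i, hin, hn⟩
  · obtain ⟨i, hi⟩ := (Filter.eventually_map.1 (Filter.mem_sup.1 hev).2).exists
    exact absurd ((hmem _).2 (Eventually.of_forall fun n => hyA n i)) hi

theorem not_isGeneric_map_near [Nontrivial M] (hC : IsCRelation (interpC L M r))
    (hmin : CMinimal L M r) (hpq : p ≠ q) {e : M} {w : M → M}
    (hw : DefinableMap L fun t : Fin 1 → M => w (t 0)) :
    ¬ IsGeneric (interpC L M r) p q (map w (near (interpC L M r) e)) := by
  intro hgen
  have := near_neBot hC e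
  let A (a : M) : Set M :=
    {b | ∃ x, x ≠ e ∧ interpC L M r a x e ∧ SameCone (interpC L M r) p q b (w x)}
  have hA : DefinablePred L fun t : Fin 2 → M => t 1 ∈ A (t 0) :=
    .ex ((DefinablePred.ne (.var _) (.const e)).and
      ((DefinablePred.interpC r (.var _) (.var _) (.const e)).and
        ((DefinablePred.interpC r (.const p) (.var _) (hw.comp (.var _))).or
          (DefinablePred.interpC r (.const q) (.var _) (hw.comp (.var _))))))
  obtain ⟨z, hz, -⟩ := hgen.exists_isScattered hC Filter.univ_mem
  have havoid : ∀ n, ∃ v, v ≠ e ∧ ∀ i ≤ n, z i ∉ A v := fun n => by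
    obtain ⟨v, hv, hvz⟩ := (mem_near hC).1 ((Filter.eventually_all_finite (Set.finite_Iic n)).2
      fun i _ => Filter.eventually_map.1 (hgen.2 (z i) (hz.1 i)))
    exact ⟨v, hv, fun i hi ⟨x, hx, hvx, hzx⟩ => hvz x hx hvx i hi hzx⟩
  choose s hs hsz using havoid
  have hAs : ∀ n, A (s n) ∈ map w (near (interpC L M r) e) := fun n =>
    (mem_near hC).2 ⟨s n, hs n, fun x hx hsx => ⟨x, hx, hsx, SameCone.refl hC hpq _⟩⟩
  choose y hy hyA using fun n => hgen.exists_isScattered hC (hAs n)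
  obtain ⟨n, i, hin, hi⟩ := hmin.exists_le_mem_of_isScattered hC hpq hA hz hy hyA
  exact hsz n i hin hi

end CMinimal

end UltraPower

section LimitSet

open Filter

section

variable {C : M → M → M → Prop} {U : Set M} {l : Filter M}

/-- The points of `U` that approximate the points of `U` tending along `l` best: no `u' ∈ U` stays
closer to them. -/
def limitSet (C : M → M → M → Prop) (U : Set M) (l : Filter M) : Set M :=
  {t | t ∈ U ∧ ∀ u' ∈ U, ∀ᶠ z in l, ¬ C t u' z}

variable {u a : M}

theorem mem_limitSet_of_not_rel (h : IsCRelation C) (hU : IsCone C U) [l.NeBot]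
    (hdec : ∀ a b, Decided l {z | C a b z}) (hu : u ∈ limitSet C U l) (ha : a ∈ limitSet C U l)
    {t : M} (hta : ¬ C t u a) : t ∈ limitSet C U l := by
  refine ⟨by_contra fun ht => hta (hU.rel_of_notMem h ht hu.1 ha.1), fun t' ht' =>
    (hdec t t').resolve_left fun hev => ?_⟩
  obtain ⟨z, ⟨hzu, hza⟩, hz⟩ := (((hu.2 t' ht').and (ha.2 t' ht')).and hev).exists
  grind [h.symm, h.asymm, h.split]

theorem eventually_rel_of_notMem_limitSet (h : IsCRelation C) (hU : IsCone C U) (hlU : U ∈ l)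
    (hdec : ∀ a b, Decided l {z | C a b z}) (hu : u ∈ limitSet C U l) {t : M}
    (ht : t ∉ limitSet C U l) : ∀ᶠ z in l, C t u z := by
  by_cases htU : t ∈ U
  · obtain ⟨u', hu', htu'⟩ : ∃ u' ∈ U, ¬ ∀ᶠ z in l, ¬ C t u' z := by
      by_contra! hcon
      exact ht ⟨htU, hcon⟩
    filter_upwards [(hdec t u').resolve_right htu', hu.2 u' hu'] with z hz hzu
    grind [h.symm, h.asymm, h.split]
  · filter_upwards [hlU] with z hz using hU.rel_of_notMem h htU hu.1 hz

theorem isGeneric_of_limitSet_eq_node (hua : limitSet C U l = node C u a)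
    (hu : u ∈ limitSet C U l) (ha : a ∈ limitSet C U l) (hl : limitSet C U l ∈ l) :
    IsGeneric C u a l := by
  refine ⟨hua ▸ hl, fun t ht => ?_⟩
  have htU : t ∈ U := (hua.symm ▸ ht : t ∈ limitSet C U l).1
  filter_upwards [hu.2 t htU, ha.2 t htU] with z hzu hza
  exact not_or.2 ⟨hzu, hza⟩

theorem le_tail_of_limitSet_eq_node (h : IsCRelation C) (hua : limitSet C U l = node C u a)
    (hl : (limitSet C U l)ᶜ ∈ l) (hout : ∀ t ∉ limitSet C U l, ∀ᶠ z in l, C t u z) :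
    l ≤ tail {y | C y a u} fun a b => C a b u := by
  simp only [hua, node, mem_ofPred_eq, not_not] at hl hout
  refine le_iInf₂ fun v hv => le_principal_iff.2 ?_
  filter_upwards [hl, hout v (h.symm hv)] with z hz hvz
  exact ⟨h.symm (not_not.1 hz), h.symm hvz⟩

theorem le_tail_of_limitSet_eq_cone (h : IsCRelation C) {b : M}
    (hub : limitSet C U l = {z | C b z u}) (hu : u ∈ limitSet C U l)
    (hball : ∀ t ∈ limitSet C U l, limitSet C U l ≠ {z | ¬ C z u t})
    (hconv : ∀ a ∈ limitSet C U l, ∀ t, ¬ C t u a → t ∈ limitSet C U l)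
    (hb : ∀ᶠ z in l, C b u z) :
    l ≤ tail {y | y ≠ u ∧ C b y u} fun a c => C c a u := by
  have hlim : ∀ t ∈ limitSet C U l, ∀ᶠ z in l, C z u t := fun t ht => by
    obtain ⟨t', ht', htt'⟩ : ∃ t' ∈ limitSet C U l, C t' u t := by
      by_contra! hcon
      exact hball t ht (Subset.antisymm hcon (hconv t ht))
    filter_upwards [ht'.2 u hu.1] with z hz
    grind [h.symm, h.asymm, h.split]
  refine le_iInf₂ fun v hv => le_principal_iff.2 ?_
  filter_upwards [hb, hlim v (hub.symm ▸ hv.2)] with z hbz hzv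
  exact ⟨⟨h.ne hzv, h.symm hbz⟩, h.symm hzv⟩

end

variable {L : FirstOrder.Language.{u, u}} [L.Structure M] {r : L.Relations 3}

theorem IsCone.definable {U : Set M} (hU : IsCone (interpC L M r) U) :
    Set.Definable₁ (univ : Set M) L U := by
  obtain ⟨p, q, -, rfl⟩ := hU
  exact DefinablePred.interpC r (.const p) (.var 0) (.const q)

theorem definable_limitSet [Nontrivial M] (hC : IsCRelation (interpC L M r)) {U : Set M}
    (hU : Set.Definable₁ (univ : Set M) L U) (e : M) {w : M → M}
    (hw : DefinableMap L fun t : Fin 1 → M => w (t 0)) :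
    Set.Definable₁ (univ : Set M) L
      (limitSet (interpC L M r) U (map w (near (interpC L M r) e))) := by
  refine (DefinablePred.mem hU (.var 0)).and (DefinablePred.all
    ((DefinablePred.mem hU (.var _)).imp ?_))
  refine DefinablePred.congr (p := fun t : Fin 1 ⊕ Fin 1 → M => ∃ v, v ≠ e ∧ ∀ x, x ≠ e →
    interpC L M r v x e → ¬ interpC L M r (t (Sum.inl 0)) (t (Sum.inr 0)) (w x)) ?_
    fun t => mem_near hC
  exact .ex ((DefinablePred.ne (.var _) (.const e)).and (.all
    ((DefinablePred.ne (.var _) (.const e)).imp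
      ((DefinablePred.interpC r (.var _) (.var _) (.const e)).imp
        (DefinablePred.interpC r (.var _) (.var _) (hw.comp (.var _))).not))))

theorem CMinimal.limitSet_subsingleton (hC : IsCRelation (interpC L M r))
    (hmin : CMinimal L M r) (hNB : NB L M r) {U : Set M} (hU : IsCone (interpC L M r) U) {e : M}
    {w : M → M} (hw : DefinableMap L fun t : Fin 1 → M => w (t 0))
    (hwU : ∀ᶠ x in near (interpC L M r) e, w x ∈ U) :
    (limitSet (interpC L M r) U (map w (near (interpC L M r) e))).Subsingleton := by
  have := hU.nontrivial
  have := near_neBot hC e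
  intro u hu v hv
  by_contra huv
  set l := map w (near (interpC L M r) e)
  set T := limitSet (interpC L M r) U l
  have hdec : ∀ A, Set.Definable₁ (univ : Set M) L A → Decided l A := fun A hA =>
    (hmin.definableTail_ne hC e).decided _ (DefinablePred.mem (s := A) hA (hw.comp (.var 0)))
  have hdecC : ∀ a b, Decided l {z | interpC L M r a b z} := fun a b =>
    hdec _ (DefinablePred.interpC r (.const a) (.const b) (.var 0))
  have hdef := definable_limitSet hC hU.definable e hw
  have hconv : ∀ a ∈ T, ∀ t, ¬ interpC L M r t u a → t ∈ T :=
    fun a ha t => mem_limitSet_of_not_rel hC hU hdecC hu ha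
  have hout : ∀ t ∉ T, ∀ᶠ z in l, interpC L M r t u z :=
    fun t => eventually_rel_of_notMem_limitSet hC hU hwU hdecC hu
  obtain ⟨p, hp⟩ := hU.exists_notMem hC
  have hpT : p ∉ T := fun h => hp h.1
  by_cases hball : ∃ a ∈ T, T = {z | ¬ interpC L M r z u a}
  · obtain ⟨a, ha, hua⟩ := hball
    have hau : a ≠ u := by
      rintro rfl
      exact (Set.ext_iff.1 hua v).1 hv (hC.rel_self_right.2 (Ne.symm huv))
    rcases hdec _ hdef with hev | hev
    · exact hmin.not_isGeneric_map_near hC hau.symm hw (isGeneric_of_limitSet_eq_node hua hu ha hev)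
    · have hpa : ¬ ¬ interpC L M r p u a := fun h => hpT (hua.symm ▸ h)
      exact NB.not_tendsto_tail_below hC hmin hNB hau ⟨p, hC.symm (not_not.1 hpa)⟩ hw
        (le_tail_of_limitSet_eq_node hC hua hev hout)
  · push Not at hball
    obtain ⟨a, ha, hua⟩ | ⟨b, hb, hub⟩ := (hmin.qfDef hdef).eq_ball_of_convex hC hu hpT hconv
    · exact hball a ha hua
    · exact NB.not_tendsto_tail_above hC hmin hNB
        ⟨v, Ne.symm huv, (Set.ext_iff.1 hub v).1 hv⟩ hw
        (le_tail_of_limitSet_eq_cone hC hub hu hball hconv (hout b hb))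

end LimitSet

namespace NiceFamily

open Filter

variable {L : FirstOrder.Language.{u, u}} [L.Structure M] {r : L.Relations 3}

section

variable {C : M → M → M → Prop} {F : NiceFamily L M C} {g : M → M}

/-- The relation between a point `x ≠ e` of `V` and the index `y ∈ U` of the function of the family
whose value at `x` is `g x`; by property (*) there is at most one such `y`. -/
def IsIndexAt (F : NiceFamily L M C) (g : M → M) (x y : M) : Prop :=
  x ∈ F.V \ {F.e} ∧ y ∈ F.U ∧ F.f y x = g x

theorem definable_isIndexAt (hg : DefinableFunOn L M F.V g) :
    DefinablePred L fun t : Fin 2 → M => F.IsIndexAt g (t 0) (t 1) := by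
  have hF : DefinablePred L fun t : Fin 3 → M => t 0 ∈ F.U ∧ t 1 ∈ F.V ∧ F.f (t 0) (t 1) = t 2 :=
    F.definable
  have hg' : DefinablePred L fun t : Fin 2 → M => t 0 ∈ F.V ∧ g (t 0) = t 1 := hg
  have hex : DefinablePred L fun t : Fin 2 → M => t 0 ≠ F.e ∧ ∃ y,
      (t 1 ∈ F.U ∧ t 0 ∈ F.V ∧ F.f (t 1) (t 0) = y) ∧ (t 0 ∈ F.V ∧ g (t 0) = y) :=
    (DefinablePred.ne (.var _) (.const F.e)).and <| DefinablePred.ex <|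
      (DefinablePred.comp₃ (p := fun x y z => x ∈ F.U ∧ y ∈ F.V ∧ F.f x y = z) hF
        (.var _) (.var _) (.var _)).and
      (DefinablePred.comp₂ (p := fun x y => x ∈ F.V ∧ g x = y) hg' (.var _) (.var _))
  refine hex.congr fun t => ⟨?_, ?_⟩
  · rintro ⟨⟨hV, he⟩, hU, hfg⟩
    exact ⟨he, _, ⟨hU, hV, hfg⟩, hV, rfl⟩
  · rintro ⟨he, y, ⟨hU, hV, hf⟩, -, hgy⟩
    exact ⟨⟨hV, he⟩, hU, hf.trans hgy.symm⟩

theorem IsIndexAt.unique {x y z : M} (hy : F.IsIndexAt g x y) (hz : F.IsIndexAt g x z) : y = z :=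
  let ⟨_, _, _, hiso⟩ := F.star x hy.1
  hiso.1.injOn hy.2.1 hz.2.1 (hy.2.2.trans hz.2.2.symm)

theorem tset_subset_limitSet (h : IsCRelation C) {w : M → M}
    (hw : ∀ᶠ x in near C F.e, F.IsIndexAt g x (w x)) :
    F.Tset g ⊆ limitSet C F.U (map w (near C F.e)) := by
  refine fun u ⟨hu, htangent⟩ => ⟨hu, fun u' hu' => eventually_map.2 ?_⟩
  filter_upwards [(htangent u' hu').eventually h, hw] with x hx ⟨hxV, hwU, hwg⟩ hrel
  obtain ⟨V', -, -, hiso⟩ := F.star x hxV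
  exact hx (hwg ▸ (hiso.2 u hu u' hu' (w x) hwU).1 hrel)

theorem not_rel_of_notMem_image (h : IsCRelation C) {x z : M} (hx : x ∈ F.V \ {F.e})
    (hz : ∀ y ∈ F.U, F.f y x ≠ z) {u v : M} (hu : u ∈ F.U) (hv : v ∈ F.U) :
    ¬ C (F.f u x) (F.f v x) z := by
  obtain ⟨V', -, hV', hiso⟩ := F.star x hx
  have hzV' : z ∉ V' := fun hmem =>
    let ⟨y, hy, hyz⟩ := hiso.1.surjOn hmem
    hz y hy hyz
  have hsep : C z (F.f u x) (F.f v x) :=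
    hV'.rel_of_notMem h hzV' (hiso.1.mapsTo hu) (hiso.1.mapsTo hv)
  exact fun hrel => h.asymm (h.symm hrel) hsep

end

theorem tset_subsingleton_or_exists_cone (hC : IsCRelation (interpC L M r))
    (hmin : CMinimal L M r) (hNB : NB L M r) (F : NiceFamily L M (interpC L M r)) {g : M → M}
    (hg : DefinableFunOn L M F.V g) :
    (F.Tset g).Subsingleton ∨ ∃ W, IsCone (interpC L M r) W ∧ F.e ∈ W ∧ W ⊆ F.V ∧
      ∀ x ∈ W \ {F.e}, ∀ u ∈ F.U, ∀ v ∈ F.U, ¬ interpC L M r (F.f u x) (F.f v x) (g x) := by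
  have := F.coneV.nontrivial
  obtain ⟨w, hw, hspec⟩ :=
    (definable_isIndexAt hg).exists_definableMap (fun _ _ _ => IsIndexAt.unique) F.e
  rcases (hmin.definableTail_ne hC F.e).decided {x | ∃ y, F.IsIndexAt g x y}
    (DefinablePred.ex ((definable_isIndexAt hg).comp₂ (.var _) (.var _))) with hin | hout
  · have hw' : ∀ᶠ x in near (interpC L M r) F.e, F.IsIndexAt g x (w x) := by
      filter_upwards [hin] with x ⟨y, hy⟩
      exact hspec x y hy ▸ hy
    exact .inl ((hmin.limitSet_subsingleton hC hNB F.coneU hw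
      (hw'.mono fun x hx => hx.2.1)).anti (tset_subset_limitSet hC hw'))
  · refine .inr ((F.coneV.mem_near_iff hC F.he).1 ?_)
    have hV : ∀ᶠ x in near (interpC L M r) F.e, x ∈ F.V \ {F.e} :=
      (F.coneV.mem_near_iff hC F.he).2 ⟨F.V, F.coneV, F.he, Subset.rfl, fun x hx => hx⟩
    filter_upwards [hV, hout] with x hxV hx u hu v hv
    exact not_rel_of_notMem_image hC hxV (fun y hy hyg => hx ⟨y, hxV, hy, hyg⟩) hu hv

theorem tset_eq_U_of_exists_cone {C : M → M → M → Prop} {F : NiceFamily L M C} {g : M → M}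
    {W : Set M} (hW : IsCone C W) (heW : F.e ∈ W) (hWV : W ⊆ F.V)
    (hF : ∀ x ∈ W \ {F.e}, ∀ u ∈ F.U, ∀ v ∈ F.U, ¬ C (F.f u x) (F.f v x) (g x)) :
    F.Tset g = F.U :=
  Subset.antisymm (fun _ hu => hu.1) fun u hu =>
    ⟨hu, fun v hv => ⟨W, hW, heW, hWV, fun x hx => hF x hx u hu v hv⟩⟩

end NiceFamily

theorem statement12 {L : FirstOrder.Language.{u, u}} {M : Type u}
    [L.Structure M] (r : L.Relations 3)
    (hC : IsCRelation (interpC L M r))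
    (hmin : CMinimal L M r)
    (hNB : NB L M r)
    (F : NiceFamily L M (interpC L M r))
    (g : M → M) (hg : DefinableFunOn L M F.V g)
    (hgV : Set.MapsTo g F.V F.V) (hge : g F.e = F.e) :
    (∃ W : Set M, IsCone (interpC L M r) W ∧ F.e ∈ W ∧ W ⊆ F.V ∧
      ∀ u ∈ F.Tset g, ∀ v ∈ F.Tset g, ∀ x ∈ W,
        Delta (interpC L M r) (F.f u x) (F.f v x) (g x)) ∧
    (∀ u ∈ F.Tset g, (∃ a ∈ F.Tset g, ∃ b ∈ F.Tset g, a ≠ b) →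
      ∃ W : Set M, IsCone (interpC L M r) W ∧ F.e ∈ W ∧ W ⊆ F.V ∧
        ∀ z ∈ F.U \ F.Tset g, ∀ x ∈ W \ {F.e},
          interpC L M r (F.f z x) (F.f u x) (g x)) := by
  rcases F.tset_subsingleton_or_exists_cone hC hmin hNB hg with hsub | ⟨W, hW, heW, hWV, hF⟩
  · refine ⟨⟨F.V, F.coneV, F.he, Subset.rfl, fun u hu v hv x _ => ?_⟩, ?_⟩
    · rw [hsub hu hv]
      exact ⟨hC.irrefl _ _, hC.irrefl _ _⟩
    · rintro u - ⟨a, ha, b, hb, hab⟩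
      exact absurd (hsub ha hb) hab
  · have hT : F.Tset g = F.U := NiceFamily.tset_eq_U_of_exists_cone hW heW hWV hF
    refine ⟨⟨W, hW, heW, hWV, fun u hu v hv x hx => ?_⟩, fun u _ _ =>
      ⟨W, hW, heW, hWV, fun z hz => absurd (hT ▸ hz.1) hz.2⟩⟩
    by_cases hxe : x = F.e
    · rw [hxe, F.fixe u hu.1, F.fixe v hv.1, hge]
      exact ⟨hC.irrefl _ _, hC.irrefl _ _⟩
    · exact ⟨hF x ⟨hx, hxe⟩ u hu.1 v hv.1, hF x ⟨hx, hxe⟩ v hv.1 u hu.1⟩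

end CMinPaper
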